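/- arXiv:1808.04199 — 2 statements merged into one kernel-verified Lean document; each statement's English description precedes it below -/
import Mathlib

section
/- For every n ≥ 3, the number of up-oriented permutations of length n with rev-tier 0 equals Catalan(n) − 2^{n−1}, where Catalan(n) is the n-th Catalan number. -/
/-!
Passing to the inverse permutation `π = σ⁻¹` (values to positions), rev-tier 0 means that `σ` has
no down oriented separated pair, and then `σ` is up-oriented exactly when it has an up oriented
one. The number sought is therefore the number of permutations without down pairs minus the number
of permutations without any separated pair.

Both are counted by inserting a new smallest value. If `e` records the positions of a shorter
permutation and the new minimum goes to position `p` (`insMin p e`), then the separated pairs not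
involving the minimum are those of `e`. The new pair is down separated iff `e 0 + 1 < p`, and up
separated iff `p < e 0` (`hasDown_insMin`, `hasUp_insMin`). Hence a permutation without separated
pairs has exactly two extensions of the same kind, which gives `2 ^ (n - 1)`. A permutation without
down pairs whose minimum is in position `k` has one extension for each new position
`0, …, k + 1`; this is the Catalan generating tree, whose `m`-th level below a node labelled `k`
has size `treeCount m k = choose (2m+k+1) m - choose (2m+k+1) (m-1)` for `m ≥ 1`, and
`treeCount m 0 = catalan (m + 1)`.
-/

/-!  Common definitions: permutation patterns, separated pairs, rev-tier. -/

/-- `π` contains the pattern `σ`. -/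
def Pattern.Contains {n k : ℕ} (π : Equiv.Perm (Fin n)) (σ : Equiv.Perm (Fin k)) : Prop :=
  ∃ α : Fin k → Fin n, StrictMono α ∧ ∀ i j : Fin k, (π (α i) < π (α j) ↔ σ i < σ j)

/-- `π` avoids the pattern `σ`. -/
def Pattern.Avoids {n k : ℕ} (π : Equiv.Perm (Fin n)) (σ : Equiv.Perm (Fin k)) : Prop :=
  ¬ Pattern.Contains π σ

/-- The pair of values `(a, a+1)` (0-indexed) is an up oriented separated pair in `σ`:
`a` precedes `a+1` and some value `> a+1` occurs strictly between them. -/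
def UpSepPair {n : ℕ} (σ : Equiv.Perm (Fin n)) (a : Fin n) : Prop :=
  ∃ hb : (a : ℕ) + 1 < n,
    σ.symm a < σ.symm ⟨(a : ℕ) + 1, hb⟩ ∧
    ∃ p : Fin n, σ.symm a < p ∧ p < σ.symm ⟨(a : ℕ) + 1, hb⟩ ∧ (a : ℕ) + 1 < (σ p : ℕ)

/-- The pair of values `(a, a+1)` (0-indexed) is a down oriented separated pair in `σ`. -/
def DownSepPair {n : ℕ} (σ : Equiv.Perm (Fin n)) (a : Fin n) : Prop :=
  ∃ hb : (a : ℕ) + 1 < n,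
    σ.symm ⟨(a : ℕ) + 1, hb⟩ < σ.symm a ∧
    ∃ p : Fin n, σ.symm ⟨(a : ℕ) + 1, hb⟩ < p ∧ p < σ.symm a ∧ (a : ℕ) + 1 < (σ p : ℕ)

/-- `(a, a+1)` is a separated pair (of either orientation). -/
def SepPair {n : ℕ} (σ : Equiv.Perm (Fin n)) (a : Fin n) : Prop :=
  UpSepPair σ a ∨ DownSepPair σ a

/-- `σ` has no separated pairs. -/
def NoSepPairs {n : ℕ} (σ : Equiv.Perm (Fin n)) : Prop :=
  ∀ a : Fin n, ¬ SepPair σ a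

/-- `f` lists the lower values of an increasing sequence of separated pairs in `σ` with
alternating orientations; the first pair is down oriented iff `firstDown = true`. -/
def AltChain {n : ℕ} (σ : Equiv.Perm (Fin n)) (firstDown : Bool) {t : ℕ}
    (f : Fin t → Fin n) : Prop :=
  StrictMono f ∧ ∀ j : Fin t,
    if ((j : ℕ) % 2 = 0) ↔ (firstDown = true) then DownSepPair σ (f j)
    else UpSepPair σ (f j)

/-- The rev-tier of `σ`: the maximal length of an increasing sequence of separated pairs
with alternating orientations beginning with a down oriented pair. -/
noncomputable def revTier {n : ℕ} (σ : Equiv.Perm (Fin n)) : ℕ :=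
  sSup {t : ℕ | ∃ f : Fin t → Fin n, AltChain σ true f}

/-- Maximal length of an increasing alternating sequence of separated pairs (either
starting orientation). -/
noncomputable def maxAltLen {n : ℕ} (σ : Equiv.Perm (Fin n)) : ℕ :=
  sSup {t : ℕ | ∃ b : Bool, ∃ f : Fin t → Fin n, AltChain σ b f}

/-- `σ` has a separated pair and every maximum-length increasing alternating sequence of
separated pairs begins with an up oriented pair. -/
def UpOriented {n : ℕ} (σ : Equiv.Perm (Fin n)) : Prop :=
  1 ≤ maxAltLen σ ∧ ¬ ∃ f : Fin (maxAltLen σ) → Fin n, AltChain σ true f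

/-- `σ` has a separated pair and every maximum-length increasing alternating sequence of
separated pairs begins with a down oriented pair. -/
def DownOriented {n : ℕ} (σ : Equiv.Perm (Fin n)) : Prop :=
  1 ≤ maxAltLen σ ∧ ¬ ∃ f : Fin (maxAltLen σ) → Fin n, AltChain σ false f

/-- `σ` is a basis element of the class of permutations of rev-tier at most `t`. -/
def IsBasisElt (t : ℕ) {n : ℕ} (σ : Equiv.Perm (Fin n)) : Prop :=
  t + 1 ≤ revTier σ ∧
  ∀ (m : ℕ) (τ : Equiv.Perm (Fin m)), m < n → Pattern.Contains σ τ → revTier τ ≤ t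

/-- The entry `1` of `σ` is in (1-indexed) position `k`. -/
def onePos {n : ℕ} (σ : Equiv.Perm (Fin n)) (k : ℕ) : Prop :=
  ∀ h : 0 < n, (σ.symm ⟨0, h⟩ : ℕ) + 1 = k

/-- `η(n,k)`: number of permutations of length `n` with no separated pairs and entry `1`
in position `k`. -/
noncomputable def eta (n k : ℕ) : ℕ :=
  Nat.card {σ : Equiv.Perm (Fin n) // NoSepPairs σ ∧ onePos σ k}

/-- `η(n)`: number of permutations of length `n` with no separated pairs. -/
noncomputable def etaTot (n : ℕ) : ℕ :=
  Nat.card {σ : Equiv.Perm (Fin n) // NoSepPairs σ}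

/-- `μ_U(n,t,k)`: number of up-oriented permutations of length `n`, rev-tier `t`, with
entry `1` in position `k`. -/
noncomputable def muU (n t k : ℕ) : ℕ :=
  Nat.card {σ : Equiv.Perm (Fin n) // UpOriented σ ∧ revTier σ = t ∧ onePos σ k}

/-- `μ_D(n,t,k)`: number of down-oriented permutations of length `n`, rev-tier `t`, with
entry `1` in position `k`. -/
noncomputable def muD (n t k : ℕ) : ℕ :=
  Nat.card {σ : Equiv.Perm (Fin n) // DownOriented σ ∧ revTier σ = t ∧ onePos σ k}

/-- `π` is a down-up alternating permutation: `π₁ > π₂ < π₃ > ⋯`. -/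
def DownUp {n : ℕ} (π : Equiv.Perm (Fin n)) : Prop :=
  ∀ (i : ℕ) (h : i + 1 < n),
    if i % 2 = 0 then π ⟨i + 1, h⟩ < π ⟨i, by omega⟩
    else π ⟨i, by omega⟩ < π ⟨i + 1, h⟩

/-- The Entringer number `E_{n,k}`: down-up alternating permutations of length `n` whose
first entry is `k` (1-indexed value). -/
noncomputable def entringer (n k : ℕ) : ℕ :=
  Nat.card {π : Equiv.Perm (Fin n) // DownUp π ∧ ∀ h : 0 < n, (π ⟨0, h⟩ : ℕ) + 1 = k}

/-- The reversal of a permutation: `(revP σ) j = σ (n + 1 - j)`. -/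
def revP {n : ℕ} (σ : Equiv.Perm (Fin n)) : Equiv.Perm (Fin n) :=
  (Fin.revPerm).trans σ

/-- The explicit maximal rev-tier permutation of length `n` (0-indexed values):
the even entries of `{1,…,n}` in decreasing order, then `n`, then the odd entries in
increasing order. -/
def maxPermVal (n : ℕ) (i : Fin n) : Fin n :=
  if h1 : (i : ℕ) < (n - 1) / 2 then
    ⟨2 * ((n - 1) / 2) - 2 * (i : ℕ) - 1, by omega⟩
  else if h2 : (i : ℕ) = (n - 1) / 2 then
    ⟨n - 1, by have := i.isLt; omega⟩
  else
    ⟨2 * ((i : ℕ) - (n - 1) / 2 - 1), by have := i.isLt; omega⟩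

def p231 : Equiv.Perm (Fin 3) :=
  ⟨![1, 2, 0], ![2, 0, 1], by decide, by decide⟩

def p132 : Equiv.Perm (Fin 3) :=
  ⟨![0, 2, 1], ![0, 2, 1], by decide, by decide⟩

def p2413 : Equiv.Perm (Fin 4) :=
  ⟨![1, 3, 0, 2], ![2, 0, 3, 1], by decide, by decide⟩

def p2431 : Equiv.Perm (Fin 4) :=
  ⟨![1, 3, 2, 0], ![3, 0, 2, 1], by decide, by decide⟩

def p23154 : Equiv.Perm (Fin 5) :=
  ⟨![1, 2, 0, 4, 3], ![2, 0, 1, 4, 3], by decide, by decide⟩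

def p24153 : Equiv.Perm (Fin 5) :=
  ⟨![1, 3, 0, 4, 2], ![2, 0, 4, 1, 3], by decide, by decide⟩

def p24513 : Equiv.Perm (Fin 5) :=
  ⟨![1, 3, 4, 0, 2], ![3, 0, 4, 1, 2], by decide, by decide⟩

def p24531 : Equiv.Perm (Fin 5) :=
  ⟨![1, 3, 4, 2, 0], ![4, 0, 3, 1, 2], by decide, by decide⟩

def p42513 : Equiv.Perm (Fin 5) :=
  ⟨![3, 1, 4, 0, 2], ![3, 1, 4, 0, 2], by decide, by decide⟩

def p42531 : Equiv.Perm (Fin 5) :=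
  ⟨![3, 1, 4, 2, 0], ![4, 1, 3, 0, 2], by decide, by decide⟩

def p231564 : Equiv.Perm (Fin 6) :=
  ⟨![1, 2, 0, 4, 5, 3], ![2, 0, 1, 5, 3, 4], by decide, by decide⟩

def p261453 : Equiv.Perm (Fin 6) :=
  ⟨![1, 5, 0, 3, 4, 2], ![2, 0, 5, 3, 4, 1], by decide, by decide⟩

def p523164 : Equiv.Perm (Fin 6) :=
  ⟨![4, 1, 2, 0, 5, 3], ![3, 1, 2, 5, 0, 4], by decide, by decide⟩

def p562413 : Equiv.Perm (Fin 6) :=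
  ⟨![4, 5, 1, 3, 0, 2], ![4, 2, 5, 3, 0, 1], by decide, by decide⟩

def p562431 : Equiv.Perm (Fin 6) :=
  ⟨![4, 5, 1, 3, 2, 0], ![5, 2, 4, 3, 0, 1], by decide, by decide⟩

def p6723154 : Equiv.Perm (Fin 7) :=
  ⟨![5, 6, 1, 2, 0, 4, 3], ![4, 2, 3, 6, 5, 0, 1], by decide, by decide⟩

def p4321 : Equiv.Perm (Fin 4) :=
  ⟨![3, 2, 1, 0], ![3, 2, 1, 0], by decide, by decide⟩

def p4213 : Equiv.Perm (Fin 4) :=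
  ⟨![3, 1, 0, 2], ![2, 1, 3, 0], by decide, by decide⟩

/-! ### The Catalan generating tree -/

/-- The number of descendants at depth `m` of a node labelled `k`, in the tree where a node
labelled `k` has one child for each label `0, …, k + 1`. -/
def treeCount : ℕ → ℕ → ℕ
  | 0, _ => 1
  | m + 1, k => ∑ j ∈ Finset.range (k + 2), treeCount m j

theorem treeCount_succ_succ (m k : ℕ) :
    treeCount (m + 1) (k + 1) = treeCount (m + 1) k + treeCount m (k + 2) := by
  simp only [treeCount]
  rw [Finset.sum_range_succ]

/-- The ballot-number formula for `treeCount (m + 1) k`, written without subtraction. -/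
theorem treeCount_add_choose (m : ℕ) : ∀ k : ℕ,
    treeCount (m + 1) k + (2 * m + k + 3).choose m = (2 * m + k + 3).choose (m + 1) := by
  induction m with
  | zero => intro k; simp [treeCount]
  | succ m ih =>
    intro k
    induction k with
    | zero =>
      have h : treeCount (m + 1 + 1) 0 = treeCount (m + 1) 0 + treeCount (m + 1) 1 := by
        rw [treeCount]; simp [Finset.sum_range_succ]
      have h0 := ih 0
      have h1 := ih 1
      have e1 := Nat.choose_succ_succ (2 * m + 4) m
      have e2 := Nat.choose_succ_succ (2 * m + 4) (m + 1)
      have e3 := Nat.choose_succ_succ (2 * m + 3) m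
      have e4 := Nat.choose_succ_succ (2 * m + 3) (m + 1)
      have e5 : (2 * m + 3).choose (m + 2) = (2 * m + 3).choose (m + 1) :=
        Nat.choose_symm_of_eq_add (by omega)
      simp only [Nat.succ_eq_add_one, show 2 * (m + 1) + 0 + 3 = 2 * m + 4 + 1 by omega,
        show 2 * m + 0 + 3 = 2 * m + 3 by omega, show 2 * m + 1 + 3 = 2 * m + 4 by omega,
        show m + 1 + 1 = m + 2 by omega] at *
      omega
    | succ k ihk =>
      have h := treeCount_succ_succ (m + 1) k
      have h1 := ih (k + 2)
      have e1 := Nat.choose_succ_succ (2 * m + k + 5) m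
      have e2 := Nat.choose_succ_succ (2 * m + k + 5) (m + 1)
      simp only [Nat.succ_eq_add_one, show 2 * (m + 1) + (k + 1) + 3 = 2 * m + k + 5 + 1 by omega,
        show 2 * m + (k + 2) + 3 = 2 * m + k + 5 by omega,
        show 2 * (m + 1) + k + 3 = 2 * m + k + 5 by omega] at *
      omega

theorem treeCount_zero_right (m : ℕ) : treeCount m 0 = catalan (m + 1) := by
  cases m with
  | zero => simp [treeCount]
  | succ m =>
    have h := treeCount_add_choose m 0
    have hc := succ_mul_catalan_eq_centralBinom (m + 2)
    rw [Nat.centralBinom_eq_two_mul_choose] at hc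
    have e1 := Nat.choose_succ_succ (2 * m + 3) (m + 1)
    have e5 : (2 * m + 3).choose (m + 2) = (2 * m + 3).choose (m + 1) :=
      Nat.choose_symm_of_eq_add (by omega)
    have e6 := Nat.choose_succ_right_eq (2 * m + 3) m
    simp only [Nat.succ_eq_add_one, show 2 * m + 0 + 3 = 2 * m + 3 by omega,
      show 2 * (m + 2) = 2 * m + 3 + 1 by omega, show m + 1 + 1 = m + 2 by omega,
      show 2 * m + 3 - m = m + 3 by omega] at *
    rw [e1, e5] at hc
    have : (m + 3) * treeCount (m + 1) 0 = (m + 3) * catalan (m + 2) := by nlinarith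
    exact Nat.eq_of_mul_eq_mul_left (by omega) this

/-! ### Separated pairs in terms of the inverse permutation -/

/-- Some pair of consecutive values is down separated, where `π` sends values to positions. -/
def HasDown {n : ℕ} (π : Equiv.Perm (Fin n)) : Prop :=
  ∃ a b c : Fin n, (b : ℕ) = a + 1 ∧ b < c ∧ π b < π c ∧ π c < π a

/-- Some pair of consecutive values is up separated, where `π` sends values to positions. -/
def HasUp {n : ℕ} (π : Equiv.Perm (Fin n)) : Prop :=
  ∃ a b c : Fin n, (b : ℕ) = a + 1 ∧ b < c ∧ π a < π c ∧ π c < π b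

theorem hasDown_symm_iff {n : ℕ} (σ : Equiv.Perm (Fin n)) :
    HasDown σ.symm ↔ ∃ a, DownSepPair σ a := by
  constructor
  · rintro ⟨a, b, c, hab, hbc, h1, h2⟩
    have hlt : (a : ℕ) + 1 < n := hab ▸ b.isLt
    obtain rfl : b = ⟨(a : ℕ) + 1, hlt⟩ := Fin.ext hab
    exact ⟨a, _, h1.trans h2, σ.symm c, h1, h2, by simpa [Fin.lt_def] using hbc⟩
  · rintro ⟨a, hb, _, p, h1, h2, h3⟩
    exact ⟨a, ⟨a + 1, hb⟩, σ p, rfl, h3, by simpa using h1, by simpa using h2⟩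

theorem hasUp_symm_iff {n : ℕ} (σ : Equiv.Perm (Fin n)) :
    HasUp σ.symm ↔ ∃ a, UpSepPair σ a := by
  constructor
  · rintro ⟨a, b, c, hab, hbc, h1, h2⟩
    have hlt : (a : ℕ) + 1 < n := hab ▸ b.isLt
    obtain rfl : b = ⟨(a : ℕ) + 1, hlt⟩ := Fin.ext hab
    exact ⟨a, _, h1.trans h2, σ.symm c, h1, h2, by simpa [Fin.lt_def] using hbc⟩
  · rintro ⟨a, hb, _, p, h1, h2, h3⟩
    exact ⟨a, ⟨a + 1, hb⟩, σ p, rfl, h3, by simpa using h1, by simpa using h2⟩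

theorem AltChain.length_le {n t : ℕ} {σ : Equiv.Perm (Fin n)} {b : Bool} {f : Fin t → Fin n}
    (h : AltChain σ b f) : t ≤ n := by
  simpa using Fintype.card_le_of_injective f h.1.injective

theorem altChain_one_true {n : ℕ} {σ : Equiv.Perm (Fin n)} {a : Fin n} (h : DownSepPair σ a) :
    AltChain σ true (fun _ : Fin 1 => a) :=
  ⟨Subsingleton.strictMono _, fun j => by simpa using h⟩

theorem altChain_one_false {n : ℕ} {σ : Equiv.Perm (Fin n)} {a : Fin n} (h : UpSepPair σ a) :
    AltChain σ false (fun _ : Fin 1 => a) :=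
  ⟨Subsingleton.strictMono _, fun j => by simpa using h⟩

theorem AltChain.exists_down {n t : ℕ} {σ : Equiv.Perm (Fin n)} {f : Fin t → Fin n}
    (h : AltChain σ true f) (ht : 1 ≤ t) : ∃ a, DownSepPair σ a :=
  ⟨f ⟨0, ht⟩, by simpa using h.2 ⟨0, ht⟩⟩

theorem AltChain.exists_up {n t : ℕ} {σ : Equiv.Perm (Fin n)} {f : Fin t → Fin n}
    (h : AltChain σ false f) (ht : 1 ≤ t) : ∃ a, UpSepPair σ a :=
  ⟨f ⟨0, ht⟩, by simpa using h.2 ⟨0, ht⟩⟩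

theorem revTier_eq_zero_iff {n : ℕ} (σ : Equiv.Perm (Fin n)) :
    revTier σ = 0 ↔ ¬ ∃ a, DownSepPair σ a := by
  constructor
  · rintro h ⟨a, ha⟩
    have : 1 ≤ revTier σ :=
      le_csSup ⟨n, fun t ⟨f, hf⟩ => hf.length_le⟩ ⟨_, altChain_one_true ha⟩
    omega
  · intro h
    refine Nat.le_zero.mp (csSup_le' ?_)
    rintro t ⟨f, hf⟩
    by_contra ht
    exact h (hf.exists_down (by omega))

theorem upOriented_and_revTier_eq_zero_iff {n : ℕ} (σ : Equiv.Perm (Fin n)) :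
    UpOriented σ ∧ revTier σ = 0 ↔ ¬ HasDown σ.symm ∧ HasUp σ.symm := by
  rw [revTier_eq_zero_iff, hasDown_symm_iff, hasUp_symm_iff]
  have hbdd : BddAbove {t : ℕ | ∃ b : Bool, ∃ f : Fin t → Fin n, AltChain σ b f} :=
    ⟨n, fun t ⟨b, f, hf⟩ => hf.length_le⟩
  constructor
  · rintro ⟨⟨h1, -⟩, hd⟩
    refine ⟨hd, ?_⟩
    have hmem : maxAltLen σ ∈ {t : ℕ | ∃ b : Bool, ∃ f : Fin t → Fin n, AltChain σ b f} := by
      refine Nat.sSup_mem ?_ hbdd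
      exact ⟨0, true, Fin.elim0, fun i => i.elim0, fun i => i.elim0⟩
    obtain ⟨b, f, hf⟩ := hmem
    cases b
    · exact hf.exists_up h1
    · exact absurd (hf.exists_down h1) hd
  · rintro ⟨hd, a, ha⟩
    have h1 : 1 ≤ maxAltLen σ := le_csSup hbdd ⟨false, _, altChain_one_false ha⟩
    exact ⟨⟨h1, fun ⟨f, hf⟩ => hd (hf.exists_down h1)⟩, hd⟩

/-! ### Inserting a new minimum -/

/-- Insert a new smallest value at position `p` into the permutation whose values are at the
positions given by `e`; both permutations send values to positions. -/
noncomputable def insMin {n : ℕ} (p : Fin (n + 1)) (e : Equiv.Perm (Fin n)) :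
    Equiv.Perm (Fin (n + 1)) :=
  Equiv.ofBijective (Fin.cons p (fun i => p.succAbove (e i)) : Fin (n + 1) → Fin (n + 1)) <|
    Finite.injective_iff_bijective.mp <| Fin.cons_injective_iff.mpr
      ⟨by rintro ⟨i, hi⟩; exact Fin.succAbove_ne _ _ hi,
        Fin.succAbove_right_injective.comp e.injective⟩

@[simp] theorem insMin_zero {n : ℕ} (p : Fin (n + 1)) (e : Equiv.Perm (Fin n)) :
    insMin p e 0 = p := rfl

@[simp] theorem insMin_succ {n : ℕ} (p : Fin (n + 1)) (e : Equiv.Perm (Fin n)) (i : Fin n) :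
    insMin p e i.succ = p.succAbove (e i) := rfl

theorem insMin_bijective (n : ℕ) :
    Function.Bijective (fun x : Fin (n + 1) × Equiv.Perm (Fin n) => insMin x.1 x.2) := by
  rw [Fintype.bijective_iff_injective_and_card]
  constructor
  · rintro ⟨p, e⟩ ⟨q, f⟩ h
    have hp : p = q := by simpa using congrArg (fun s => s 0) h
    subst hp
    have he : e = f := by
      ext1 i
      have := congrArg (fun s => s i.succ) h
      simpa using this
    rw [he]
  · simp [Fintype.card_perm, Nat.factorial_succ]

theorem sum_perm_succ {n : ℕ} (F : Equiv.Perm (Fin (n + 1)) → ℕ) :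
    ∑ π, F π = ∑ e : Equiv.Perm (Fin n), ∑ p : Fin (n + 1), F (insMin p e) := by
  rw [← Fintype.sum_bijective _ (insMin_bijective n) (fun x => F (insMin x.1 x.2)) F
    (fun _ => rfl), Fintype.sum_prod_type_right]

/-- The new pair is down separated exactly when the new minimum is placed to the right of the old
one and not next to it. -/
theorem hasDown_insMin {n : ℕ} (p : Fin (n + 2)) (e : Equiv.Perm (Fin (n + 1))) :
    HasDown (insMin p e) ↔ HasDown e ∨ (e 0 : ℕ) + 1 < p := by
  constructor
  · rintro ⟨a, b, c, hab, hbc, h1, h2⟩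
    obtain ⟨b, rfl⟩ := Fin.exists_succ_eq.mpr (show b ≠ 0 by rintro rfl; simp at hab)
    obtain ⟨c, rfl⟩ := Fin.exists_succ_eq.mpr (show c ≠ 0 by rintro rfl; simp at hbc)
    simp only [insMin_succ, Fin.succAbove_lt_succAbove_iff, Fin.succ_lt_succ_iff] at h1 hbc
    cases a using Fin.cases with
    | zero =>
      have hb : b = 0 := Fin.ext (by simpa using hab)
      subst hb
      rw [insMin_zero, insMin_succ, Fin.succAbove_lt_iff_castSucc_lt] at h2
      simp only [Fin.lt_def, Fin.val_castSucc] at h1 h2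
      right; omega
    | succ a =>
      simp only [insMin_succ, Fin.succAbove_lt_succAbove_iff] at h2
      exact Or.inl ⟨a, b, c, by simpa using hab, hbc, h1, h2⟩
  · rintro (⟨a, b, c, hab, hbc, h1, h2⟩ | h)
    · exact ⟨a.succ, b.succ, c.succ, by simpa using hab, by simpa using hbc,
        by simpa using h1, by simpa using h2⟩
    -- The separator is the value right after the old minimum.
    · obtain ⟨c, hc⟩ := e.surjective ⟨(e 0 : ℕ) + 1, by omega⟩
      have hc0 : c ≠ 0 := by
        rintro rfl
        have := congrArg Fin.val hc
        simp at this
      refine ⟨0, Fin.succ 0, c.succ, by simp, ?_, ?_, ?_⟩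
      · exact Fin.succ_lt_succ_iff.mpr (Fin.pos_of_ne_zero hc0)
      · rw [insMin_succ, insMin_succ, Fin.succAbove_lt_succAbove_iff, hc, Fin.lt_def]
        simp
      · rw [insMin_zero, insMin_succ, Fin.succAbove_lt_iff_castSucc_lt, hc]
        simpa [Fin.lt_def] using h

/-- The new pair is up separated exactly when the new minimum is placed to the left of the old
one and not next to it. -/
theorem hasUp_insMin {n : ℕ} (p : Fin (n + 2)) (e : Equiv.Perm (Fin (n + 1))) :
    HasUp (insMin p e) ↔ HasUp e ∨ (p : ℕ) < e 0 := by
  constructor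
  · rintro ⟨a, b, c, hab, hbc, h1, h2⟩
    obtain ⟨b, rfl⟩ := Fin.exists_succ_eq.mpr (show b ≠ 0 by rintro rfl; simp at hab)
    obtain ⟨c, rfl⟩ := Fin.exists_succ_eq.mpr (show c ≠ 0 by rintro rfl; simp at hbc)
    simp only [insMin_succ, Fin.succAbove_lt_succAbove_iff, Fin.succ_lt_succ_iff] at h2 hbc
    cases a using Fin.cases with
    | zero =>
      have hb : b = 0 := Fin.ext (by simpa using hab)
      subst hb
      rw [insMin_zero, insMin_succ, Fin.lt_succAbove_iff_le_castSucc] at h1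
      simp only [Fin.lt_def, Fin.le_def, Fin.val_castSucc] at h1 h2
      right; omega
    | succ a =>
      simp only [insMin_succ, Fin.succAbove_lt_succAbove_iff] at h1
      exact Or.inl ⟨a, b, c, by simpa using hab, hbc, h1, h2⟩
  · rintro (⟨a, b, c, hab, hbc, h1, h2⟩ | h)
    · exact ⟨a.succ, b.succ, c.succ, by simpa using hab, by simpa using hbc,
        by simpa using h1, by simpa using h2⟩
    -- The separator is the value that `e` has in position `p`, hence right after the new minimum.
    · obtain ⟨c, hc⟩ := e.surjective ⟨(p : ℕ), by omega⟩
      have hc0 : c ≠ 0 := by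
        rintro rfl
        have := congrArg Fin.val hc
        simp at this
        omega
      refine ⟨0, Fin.succ 0, c.succ, by simp, ?_, ?_, ?_⟩
      · exact Fin.succ_lt_succ_iff.mpr (Fin.pos_of_ne_zero hc0)
      · rw [insMin_zero, insMin_succ, Fin.lt_succAbove_iff_le_castSucc, hc]
        simp
      · rw [insMin_succ, insMin_succ, Fin.succAbove_lt_succAbove_iff, hc, Fin.lt_def]
        simpa using h

/-! ### Counting -/

theorem not_hasDown_one (π : Equiv.Perm (Fin 1)) : ¬ HasDown π := by
  rintro ⟨a, b, c, hab, -⟩; omega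

theorem not_hasUp_one (π : Equiv.Perm (Fin 1)) : ¬ HasUp π := by
  rintro ⟨a, b, c, hab, -⟩; omega

open Classical in
/-- One step of the generating tree, for an arbitrary weight `g` on the position of the minimum. -/
theorem sum_not_hasDown_succ (n : ℕ) (g : ℕ → ℕ) :
    (∑ π : Equiv.Perm (Fin (n + 2)), if HasDown π then 0 else g (π 0)) =
      ∑ e : Equiv.Perm (Fin (n + 1)),
        if HasDown e then 0 else ∑ j ∈ Finset.range ((e 0 : ℕ) + 2), g j := by
  rw [sum_perm_succ]
  refine Finset.sum_congr rfl fun e _ => ?_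
  simp only [hasDown_insMin, insMin_zero]
  by_cases he : HasDown e
  · simp [he]
  · simp only [he, false_or, if_false]
    rw [Fin.sum_univ_eq_sum_range (fun j => if (e 0 : ℕ) + 1 < j then 0 else g j) (n + 2)]
    refine (Finset.sum_subset_zero_on_sdiff (by
      intro j; simp only [Finset.mem_range]; omega) ?_ ?_).symm
    · intro j hj
      simp only [Finset.mem_sdiff, Finset.mem_range] at hj
      rw [if_pos (by omega)]
    · intro j hj
      simp only [Finset.mem_range] at hj
      rw [if_neg (by omega)]

open Classical in
theorem sum_not_hasDown_treeCount (n : ℕ) : ∀ m : ℕ,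
    (∑ π : Equiv.Perm (Fin (n + 1)), if HasDown π then 0 else treeCount m (π 0)) =
      treeCount (n + m) 0 := by
  induction n with
  | zero => intro m; simp [not_hasDown_one]
  | succ n ih =>
    intro m
    rw [sum_not_hasDown_succ, show n + 1 + m = n + (m + 1) by omega, ← ih (m + 1)]
    rfl

open Classical in
theorem sum_not_hasDown (n : ℕ) :
    (∑ π : Equiv.Perm (Fin (n + 1)), if HasDown π then 0 else 1) = catalan (n + 1) := by
  rw [← treeCount_zero_right]
  exact sum_not_hasDown_treeCount n 0

open Classical in
theorem sum_not_hasSep (n : ℕ) :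
    (∑ π : Equiv.Perm (Fin (n + 1)), if HasDown π ∨ HasUp π then 0 else 1) = 2 ^ n := by
  induction n with
  | zero => simp [not_hasDown_one, not_hasUp_one]
  | succ n ih =>
    rw [sum_perm_succ, pow_succ, ← ih, Finset.sum_mul]
    refine Finset.sum_congr rfl fun e _ => ?_
    simp only [hasDown_insMin, hasUp_insMin]
    by_cases he : HasDown e ∨ HasUp e
    · rw [if_pos he, zero_mul]
      refine Finset.sum_eq_zero fun p _ => if_pos (by tauto)
    · rw [if_neg he, one_mul]
      -- The two admissible positions are those next to the old minimum.
      have key : ∀ p : Fin (n + 2), (if (HasDown e ∨ (e 0 : ℕ) + 1 < p) ∨ HasUp e ∨ (p : ℕ) < e 0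
          then 0 else 1) = if p ∈ ({(e 0).castSucc, (e 0).succ} : Finset (Fin (n + 2)))
          then 1 else 0 := by
        intro p
        push Not at he
        simp only [he.1, he.2, false_or, Finset.mem_insert, Finset.mem_singleton, Fin.ext_iff,
          Fin.val_castSucc, Fin.val_succ]
        split_ifs <;> omega
      rw [Finset.sum_congr rfl fun p _ => key p, Finset.sum_ite_mem, Finset.univ_inter,
        Finset.sum_const, Finset.card_pair (Fin.castSucc_lt_succ).ne, smul_eq_mul, mul_one]

/-- for `n ≥ 3` the number of up-oriented permutations of length `n` with
rev-tier 0 is `catalan n - 2^(n-1)`. -/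
theorem upOriented_tier_zero_count (n : ℕ) (hn : 3 ≤ n) :
    Nat.card {σ : Equiv.Perm (Fin n) // UpOriented σ ∧ revTier σ = 0}
      = catalan n - 2 ^ (n - 1) := by
  classical
  obtain ⟨n, rfl⟩ : ∃ m, n = m + 1 := ⟨n - 1, by omega⟩
  have hcard : Nat.card {σ : Equiv.Perm (Fin (n + 1)) // UpOriented σ ∧ revTier σ = 0} =
      ∑ π : Equiv.Perm (Fin (n + 1)), if ¬ HasDown π ∧ HasUp π then 1 else 0 := by
    rw [Nat.card_congr ((Equiv.inv (Equiv.Perm (Fin (n + 1)))).subtypeEquiv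
      (q := fun π => ¬ HasDown π ∧ HasUp π) upOriented_and_revTier_eq_zero_iff),
      Nat.card_eq_fintype_card, Fintype.card_subtype, Finset.card_filter]
  have hsum : (∑ π : Equiv.Perm (Fin (n + 1)), if ¬ HasDown π ∧ HasUp π then 1 else 0) +
      (∑ π : Equiv.Perm (Fin (n + 1)), if HasDown π ∨ HasUp π then 0 else 1) =
      ∑ π : Equiv.Perm (Fin (n + 1)), if HasDown π then 0 else 1 := by
    rw [← Finset.sum_add_distrib]
    refine Finset.sum_congr rfl fun π _ => ?_
    by_cases h1 : HasDown π <;> by_cases h2 : HasUp π <;> simp [h1, h2]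
  rw [sum_not_hasSep, sum_not_hasDown] at hsum
  rw [hcard, Nat.add_sub_cancel]
  omega
end

section
/- For every n ≥ 1, the number of permutations of length n avoiding both 4321 and 4213 equals the number of permutations of length n avoiding all of 2413, 2431, and 23154; that is, the permutation classes Av(4321, 4213) and Av(2413, 2431, 23154) are Wilf equivalent. -/
open Finset PowerSeries

namespace Wilf

/-! ### Permutations as precedence relations -/

/-- The value `a` stands to the left of the value `b` in the one-line notation of `π`
(values are read as natural numbers). -/
def Before {n : ℕ} (π : Equiv.Perm (Fin n)) (a b : ℕ) : Prop :=
  ∃ i j : Fin n, i < j ∧ (π i : ℕ) = a ∧ (π j : ℕ) = b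

/-- `B` is a strict linear order on `{0, …, n - 1}` and relates nothing else. -/
structure IsOrd (n : ℕ) (B : ℕ → ℕ → Prop) : Prop where
  lt_left : ∀ x y, B x y → x < n
  lt_right : ∀ x y, B x y → y < n
  irrefl : ∀ x, ¬ B x x
  trans : ∀ x y z, B x y → B y z → B x z
  total : ∀ x y, x < n → y < n → x ≠ y → B x y ∨ B y x

/-- The precedence relation after a new first entry `v` is put in front of a permutation of
length `n` with precedence relation `B`, the old values `≥ v` being raised by one. -/
def ins (n v : ℕ) (B : ℕ → ℕ → Prop) (a b : ℕ) : Prop :=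
  (a = v ∧ b ≠ v ∧ b ≤ n) ∨
    (a ≠ v ∧ b ≠ v ∧ B (if a < v then a else a - 1) (if b < v then b else b - 1))

theorem isOrd_before {n : ℕ} (π : Equiv.Perm (Fin n)) : IsOrd n (Before π) where
  lt_left := by rintro x y ⟨i, j, -, rfl, -⟩; exact (π i).2
  lt_right := by rintro x y ⟨i, j, -, -, rfl⟩; exact (π j).2
  irrefl := by
    rintro x ⟨i, j, h, rfl, h2⟩
    have := π.injective (Fin.ext h2)
    exact absurd h (by simp [this])
  trans := by
    rintro x y z ⟨i, j, h, rfl, rfl⟩ ⟨k, l, h', h2, rfl⟩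
    have := π.injective (Fin.ext h2)
    exact ⟨i, l, h.trans (this ▸ h'), rfl, rfl⟩
  total := by
    intro x y hx hy hxy
    rcases lt_trichotomy (π.symm ⟨x, hx⟩) (π.symm ⟨y, hy⟩) with h | h | h
    · exact .inl ⟨_, _, h, by simp, by simp⟩
    · exact absurd (by simpa using h) hxy
    · exact .inr ⟨_, _, h, by simp, by simp⟩

/-- The permutation with first entry `v` whose remaining entries are order isomorphic to `π`. -/
noncomputable def consPerm {n : ℕ} (v : Fin (n + 1)) (π : Equiv.Perm (Fin n)) :
    Equiv.Perm (Fin (n + 1)) :=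
  Equiv.ofBijective (Fin.cons v fun i => v.succAbove (π i)) <| by
    rw [← Finite.injective_iff_bijective, Fin.cons_injective_iff]
    refine ⟨?_, fun i j h => π.injective (Fin.succAbove_right_injective h)⟩
    rintro ⟨i, hi⟩
    exact Fin.succAbove_ne _ _ hi

@[simp] theorem consPerm_zero {n : ℕ} (v : Fin (n + 1)) (π : Equiv.Perm (Fin n)) :
    consPerm v π 0 = v := rfl

@[simp] theorem consPerm_succ {n : ℕ} (v : Fin (n + 1)) (π : Equiv.Perm (Fin n)) (i : Fin n) :
    consPerm v π i.succ = v.succAbove (π i) := rfl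

theorem consPerm_bijective (n : ℕ) :
    Function.Bijective fun p : Fin (n + 1) × Equiv.Perm (Fin n) => consPerm p.1 p.2 := by
  rw [Fintype.bijective_iff_injective_and_card]
  constructor
  · rintro ⟨v, π⟩ ⟨w, ρ⟩ h
    have h0 : v = w := by simpa using congrArg (fun e : Equiv.Perm (Fin (n + 1)) => e 0) h
    subst h0
    refine Prod.ext rfl (Equiv.ext fun i => ?_)
    have := congrArg (fun e : Equiv.Perm (Fin (n + 1)) => e i.succ) h
    simpa using this
  · simp [Fintype.card_perm, Nat.factorial_succ]

theorem succAbove_val {n : ℕ} (v : Fin (n + 1)) (x : Fin n) :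
    (v.succAbove x : ℕ) = if (x : ℕ) < v then (x : ℕ) else x + 1 := by
  simp only [Fin.succAbove, Fin.lt_def, Fin.val_castSucc]
  split_ifs <;> simp

theorem before_consPerm {n : ℕ} (v : Fin (n + 1)) (π : Equiv.Perm (Fin n)) :
    Before (consPerm v π) = ins n v (Before π) := by
  funext a b
  apply propext
  constructor
  · rintro ⟨i, j, hij, rfl, rfl⟩
    induction j using Fin.cases with
    | zero => simp at hij
    | succ j =>
      have hj := (π j).2
      induction i using Fin.cases with
      | zero =>
        left
        simp only [consPerm_zero, consPerm_succ, succAbove_val]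
        refine ⟨trivial, ?_, ?_⟩ <;> split_ifs <;> omega
      | succ i =>
        right
        simp only [consPerm_succ, succAbove_val]
        refine ⟨by split_ifs <;> omega, by split_ifs <;> omega, i, j, by simpa using hij, ?_, ?_⟩
        · split_ifs <;> omega
        · split_ifs <;> omega
  · rintro (⟨rfl, hb, hbn⟩ | ⟨ha, hb, i, j, hij, h1, h2⟩)
    · have hb' : (⟨b, by omega⟩ : Fin (n + 1)) ≠ v := fun h => hb (by simp [← h])
      obtain ⟨y, hy⟩ := Fin.exists_succAbove_eq hb'
      exact ⟨0, (π.symm y).succ, Fin.succ_pos _, rfl, by simp [hy]⟩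
    · refine ⟨i.succ, j.succ, by simpa using hij, ?_, ?_⟩
      · simp only [consPerm_succ, succAbove_val, h1]
        split_ifs <;> omega
      · simp only [consPerm_succ, succAbove_val, h2]
        split_ifs <;> omega

/-! ### Pattern containment through precedence -/

theorem contains4 {n : ℕ} (π : Equiv.Perm (Fin n)) (σ : Equiv.Perm (Fin 4)) :
    Pattern.Contains π σ ↔ ∃ a : Fin 4 → ℕ, Before π (a 0) (a 1) ∧ Before π (a 1) (a 2) ∧
      Before π (a 2) (a 3) ∧ ∀ i j, a i < a j ↔ σ i < σ j := by
  constructor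
  · rintro ⟨α, hα, h⟩
    exact ⟨fun i => π (α i), ⟨_, _, hα (by decide), rfl, rfl⟩, ⟨_, _, hα (by decide), rfl, rfl⟩,
      ⟨_, _, hα (by decide), rfl, rfl⟩, h⟩
  · rintro ⟨a, ⟨i, j, h1, e0, e1⟩, ⟨j', k, h2, e1', e2⟩, ⟨k', l, h3, e2', e3⟩, h⟩
    obtain rfl : j = j' := π.injective (Fin.ext (e1.trans e1'.symm))
    obtain rfl : k = k' := π.injective (Fin.ext (e2.trans e2'.symm))
    have hv : ∀ t, (π (![i, j, k, l] t) : ℕ) = a t := by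
      intro t; fin_cases t <;> simp [*]
    refine ⟨![i, j, k, l], ?_, fun s t => ?_⟩
    · rw [Fin.strictMono_iff_lt_succ]
      intro t; fin_cases t <;> simpa
    · rw [Fin.lt_def, hv, hv, h]

theorem contains5 {n : ℕ} (π : Equiv.Perm (Fin n)) (σ : Equiv.Perm (Fin 5)) :
    Pattern.Contains π σ ↔ ∃ a : Fin 5 → ℕ, Before π (a 0) (a 1) ∧ Before π (a 1) (a 2) ∧
      Before π (a 2) (a 3) ∧ Before π (a 3) (a 4) ∧ ∀ i j, a i < a j ↔ σ i < σ j := by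
  constructor
  · rintro ⟨α, hα, h⟩
    exact ⟨fun i => π (α i), ⟨_, _, hα (by decide), rfl, rfl⟩, ⟨_, _, hα (by decide), rfl, rfl⟩,
      ⟨_, _, hα (by decide), rfl, rfl⟩, ⟨_, _, hα (by decide), rfl, rfl⟩, h⟩
  · rintro ⟨a, ⟨i, j, h1, e0, e1⟩, ⟨j', k, h2, e1', e2⟩, ⟨k', l, h3, e2', e3⟩,
      ⟨l', r, h4, e3', e4⟩, h⟩
    obtain rfl : j = j' := π.injective (Fin.ext (e1.trans e1'.symm))
    obtain rfl : k = k' := π.injective (Fin.ext (e2.trans e2'.symm))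
    obtain rfl : l = l' := π.injective (Fin.ext (e3.trans e3'.symm))
    have hv : ∀ t, (π (![i, j, k, l, r] t) : ℕ) = a t := by
      intro t; fin_cases t <;> simp [*]
    refine ⟨![i, j, k, l, r], ?_, fun s t => ?_⟩
    · rw [Fin.strictMono_iff_lt_succ]
      intro t; fin_cases t <;> simpa
    · rw [Fin.lt_def, hv, hv, h]

/-- Avoidance of 4321 and 4213, read off the precedence relation. -/
def ClassA (B : ℕ → ℕ → Prop) : Prop :=
  ∀ a b c d, B a b → B b c → B c d →
    ¬ (d < c ∧ c < b ∧ b < a) ∧ ¬ (c < b ∧ b < d ∧ d < a)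

/-- Avoidance of 2413, 2431 and 23154, read off the precedence relation. -/
def ClassB (B : ℕ → ℕ → Prop) : Prop :=
  (∀ a b c d, B a b → B b c → B c d →
    ¬ (c < a ∧ a < d ∧ d < b) ∧ ¬ (d < a ∧ a < c ∧ c < b)) ∧
  ∀ a b c d e, B a b → B b c → B c d → B d e → ¬ (c < a ∧ a < b ∧ b < e ∧ e < d)

theorem avoids4321 {n : ℕ} (π : Equiv.Perm (Fin n)) : Pattern.Avoids π p4321 ↔
    ∀ a b c d, Before π a b → Before π b c → Before π c d → ¬ (d < c ∧ c < b ∧ b < a) := by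
  rw [Pattern.Avoids, contains4]
  constructor
  · intro h a b c d h1 h2 h3 h4
    refine h ⟨![a, b, c, d], h1, h2, h3, fun i j => ?_⟩
    fin_cases i <;> fin_cases j <;> simp [p4321] <;> omega
  · rintro h ⟨a, h1, h2, h3, h4⟩
    exact h _ _ _ _ h1 h2 h3
      ⟨(h4 _ _).2 (by decide), (h4 _ _).2 (by decide), (h4 _ _).2 (by decide)⟩

theorem avoids4213 {n : ℕ} (π : Equiv.Perm (Fin n)) : Pattern.Avoids π p4213 ↔
    ∀ a b c d, Before π a b → Before π b c → Before π c d → ¬ (c < b ∧ b < d ∧ d < a) := by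
  rw [Pattern.Avoids, contains4]
  constructor
  · intro h a b c d h1 h2 h3 h4
    refine h ⟨![a, b, c, d], h1, h2, h3, fun i j => ?_⟩
    fin_cases i <;> fin_cases j <;> simp [p4213] <;> omega
  · rintro h ⟨a, h1, h2, h3, h4⟩
    exact h _ _ _ _ h1 h2 h3
      ⟨(h4 _ _).2 (by decide), (h4 _ _).2 (by decide), (h4 _ _).2 (by decide)⟩

theorem avoids2413 {n : ℕ} (π : Equiv.Perm (Fin n)) : Pattern.Avoids π p2413 ↔
    ∀ a b c d, Before π a b → Before π b c → Before π c d → ¬ (c < a ∧ a < d ∧ d < b) := by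
  rw [Pattern.Avoids, contains4]
  constructor
  · intro h a b c d h1 h2 h3 h4
    refine h ⟨![a, b, c, d], h1, h2, h3, fun i j => ?_⟩
    fin_cases i <;> fin_cases j <;> simp [p2413] <;> omega
  · rintro h ⟨a, h1, h2, h3, h4⟩
    exact h _ _ _ _ h1 h2 h3
      ⟨(h4 _ _).2 (by decide), (h4 _ _).2 (by decide), (h4 _ _).2 (by decide)⟩

theorem avoids2431 {n : ℕ} (π : Equiv.Perm (Fin n)) : Pattern.Avoids π p2431 ↔
    ∀ a b c d, Before π a b → Before π b c → Before π c d → ¬ (d < a ∧ a < c ∧ c < b) := by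
  rw [Pattern.Avoids, contains4]
  constructor
  · intro h a b c d h1 h2 h3 h4
    refine h ⟨![a, b, c, d], h1, h2, h3, fun i j => ?_⟩
    fin_cases i <;> fin_cases j <;> simp [p2431] <;> omega
  · rintro h ⟨a, h1, h2, h3, h4⟩
    exact h _ _ _ _ h1 h2 h3
      ⟨(h4 _ _).2 (by decide), (h4 _ _).2 (by decide), (h4 _ _).2 (by decide)⟩

theorem avoids23154 {n : ℕ} (π : Equiv.Perm (Fin n)) : Pattern.Avoids π p23154 ↔
    ∀ a b c d e, Before π a b → Before π b c → Before π c d → Before π d e →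
      ¬ (c < a ∧ a < b ∧ b < e ∧ e < d) := by
  rw [Pattern.Avoids, contains5]
  constructor
  · intro h a b c d e h1 h2 h3 h4 h5
    refine h ⟨![a, b, c, d, e], h1, h2, h3, h4, fun i j => ?_⟩
    fin_cases i <;> fin_cases j <;> simp [p23154] <;> omega
  · rintro h ⟨a, h1, h2, h3, h4, h5⟩
    exact h _ _ _ _ _ h1 h2 h3 h4
      ⟨(h5 _ _).2 (by decide), (h5 _ _).2 (by decide), (h5 _ _).2 (by decide),
        (h5 _ _).2 (by decide)⟩

theorem avoidsA_iff {n : ℕ} (π : Equiv.Perm (Fin n)) :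
    Pattern.Avoids π p4321 ∧ Pattern.Avoids π p4213 ↔ ClassA (Before π) := by
  rw [avoids4321, avoids4213, ClassA]
  grind

theorem avoidsB_iff {n : ℕ} (π : Equiv.Perm (Fin n)) :
    Pattern.Avoids π p2413 ∧ Pattern.Avoids π p2431 ∧ Pattern.Avoids π p23154 ↔
      ClassB (Before π) := by
  rw [avoids2413, avoids2431, avoids23154, ClassB]
  grind

/-! ### Counting along the generating tree -/

open Classical in
/-- The number of ways of putting `k` further entries, one after another, in front of a
permutation of length `n` with precedence relation `B` without leaving the class `P`. -/
noncomputable def cnt (P : (ℕ → ℕ → Prop) → Prop) : ℕ → ℕ → (ℕ → ℕ → Prop) → ℤ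
  | 0, _, _ => 1
  | k + 1, n, B => ∑ v ∈ range (n + 1), if P (ins n v B) then cnt P k (n + 1) (ins n v B) else 0

open Classical in
theorem sum_cnt (P : (ℕ → ℕ → Prop) → Prop)
    (hP : ∀ n v B, IsOrd n B → v ≤ n → P (ins n v B) → P B) (k n N : ℕ) (h : n + k = N) :
    ∑ π : Equiv.Perm (Fin n), (if P (Before π) then cnt P k n (Before π) else 0) =
      Nat.card {π : Equiv.Perm (Fin N) // P (Before π)} := by
  induction k generalizing n with
  | zero =>
    subst h
    simp [cnt, Nat.card_eq_fintype_card, Fintype.card_subtype]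
  | succ k ih =>
    rw [← ih (n + 1) (by omega), ← (consPerm_bijective n).sum_comp, Fintype.sum_prod_type_right]
    refine Finset.sum_congr rfl fun π _ => ?_
    simp only [before_consPerm]
    split_ifs with hπ
    · rw [cnt, Finset.sum_range]
    · refine (Finset.sum_eq_zero fun v _ => if_neg fun h => hπ ?_).symm
      exact hP n v _ (isOrd_before π) (by omega) h

/-- A relation `R` between permutations (given by length and precedence relation) and power
series such that the series of a permutation is one plus `X` times the sum of the series of its
children determines the counting numbers `cnt`. -/
theorem cnt_eq_coeff (P : (ℕ → ℕ → Prop) → Prop) (R : ℕ → (ℕ → ℕ → Prop) → ℤ⟦X⟧ → Prop)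
    (hR : ∀ n B F, IsOrd n B → P B → R n B F → ∃ G : ℕ → ℤ⟦X⟧,
      (∀ v ≤ n, (P (ins n v B) ∧ R (n + 1) (ins n v B) (G v)) ∨ (¬ P (ins n v B) ∧ G v = 0)) ∧
      F = 1 + X * ∑ v ∈ range (n + 1), G v)
    (hO : ∀ n v B, IsOrd n B → v ≤ n → IsOrd (n + 1) (ins n v B))
    (k n : ℕ) (B : ℕ → ℕ → Prop) (F : ℤ⟦X⟧) (hB : IsOrd n B) (h : P B) (hF : R n B F) :
    cnt P k n B = coeff k F := by
  induction k generalizing n B F with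
  | zero =>
    obtain ⟨G, -, rfl⟩ := hR n B F hB h hF
    simp [cnt]
  | succ k ih =>
    obtain ⟨G, hG, rfl⟩ := hR n B F hB h hF
    rw [cnt, map_add, coeff_succ_X_mul, map_sum, coeff_one, if_neg (by omega), zero_add]
    refine Finset.sum_congr rfl fun v hv => ?_
    have hv' : v ≤ n := by simpa [Nat.lt_succ_iff] using hv
    rcases hG v hv' with ⟨h1, h2⟩ | ⟨h1, h2⟩
    · rw [if_pos h1, ih _ _ _ (hO n v B hB hv') h1 h2]
    · rw [if_neg h1, h2, map_zero]

theorem IsOrd.ins {n v : ℕ} {B : ℕ → ℕ → Prop} (hB : IsOrd n B) (hv : v ≤ n) :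
    IsOrd (n + 1) (ins n v B) := by
  obtain ⟨h1, h2, h3, h4, h5⟩ := hB
  constructor <;> unfold Wilf.ins
  · grind
  · grind
  · grind
  · grind
  · intro x y hx hy hxy
    by_cases h : x = v
    · grind
    by_cases h' : y = v
    · grind
    have := h5 (if x < v then x else x - 1) (if y < v then y else y - 1)
    grind

/-- If the root of the generating tree carries the series `F`, then the class is enumerated
by `F`. -/
theorem card_eq_coeff (P : (ℕ → ℕ → Prop) → Prop) (R : ℕ → (ℕ → ℕ → Prop) → ℤ⟦X⟧ → Prop)
    (hP : ∀ n v B, IsOrd n B → v ≤ n → P (ins n v B) → P B)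
    (hR : ∀ n B F, IsOrd n B → P B → R n B F → ∃ G : ℕ → ℤ⟦X⟧,
      (∀ v ≤ n, (P (ins n v B) ∧ R (n + 1) (ins n v B) (G v)) ∨ (¬ P (ins n v B) ∧ G v = 0)) ∧
      F = 1 + X * ∑ v ∈ range (n + 1), G v)
    (F : ℤ⟦X⟧) (hroot : ∀ B, IsOrd 0 B → P B ∧ R 0 B F) (N : ℕ) :
    (Nat.card {π : Equiv.Perm (Fin N) // P (Before π)} : ℤ) = coeff N F := by
  rw [← sum_cnt P hP N 0 N (by omega)]
  have h0 := fun π : Equiv.Perm (Fin 0) => hroot _ (isOrd_before π)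
  simp only [(h0 _).1, if_true, Finset.univ_unique, Finset.sum_singleton]
  exact cnt_eq_coeff P R hR (fun n v B hB hv => hB.ins hv) N 0 _ F (isOrd_before _) (h0 _).1
    (h0 _).2

/-! ### The algebraic series -/

theorem exists_series : ∃ C L g r : ℤ⟦X⟧, C = 1 + X * C ^ 2 ∧ L = 1 + X * C * L ^ 2 ∧
    g * (1 - X * L) = 1 ∧ r * (1 - X * g) = 1 := by
  have hc : (catalanSeries.map (Nat.castRingHom ℤ)) =
      1 + X * (catalanSeries.map (Nat.castRingHom ℤ)) ^ 2 := by
    conv_lhs => rw [← catalanSeries_sq_mul_X_add_one]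
    simp
    ring
  set C := catalanSeries.map (Nat.castRingHom ℤ)
  have hs : HasSubst (X * C : ℤ⟦X⟧) := HasSubst.of_constantCoeff_zero' (by simp)
  have inv : ∀ f : ℤ⟦X⟧, ∃ g : ℤ⟦X⟧, g * (1 - X * f) = 1 := fun f =>
    ⟨invOfUnit (1 - X * f) 1, by rw [mul_comm]; exact mul_invOfUnit _ _ (by simp)⟩
  obtain ⟨g, hg⟩ := inv (C.subst (X * C))
  obtain ⟨r, hr⟩ := inv g
  refine ⟨C, C.subst (X * C), g, r, hc, ?_, hg, hr⟩
  have h := congrArg (substAlgHom hs) hc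
  simp only [map_add, map_mul, map_one, map_pow, substAlgHom_X] at h
  simpa only [coe_substAlgHom hs] using h

/-- The factor of the weight of a state of the first tree that accounts for `d` upper values in
front of the minimum. -/
noncomputable def hSeq (C L r : ℤ⟦X⟧) : ℕ → ℤ⟦X⟧
  | 0 => 1
  | d + 1 => C * hSeq C L r d + X * C * L ^ 2 * (C - 1) * r ^ d

section Series

variable {C L g r : ℤ⟦X⟧}

theorem sum_pow_shift {y Z : ℤ⟦X⟧} (h : Z = 1 + y * Z ^ 2) (m : ℕ) :
    y * ∑ j ∈ range m, Z ^ (j + 2) = Z ^ m - 1 := by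
  induction m with
  | zero => simp
  | succ m ih => rw [sum_range_succ, mul_add, ih]; linear_combination -Z ^ m * h

theorem hSeq_one (hL : L = 1 + X * C * L ^ 2) :
    hSeq C L r 1 = C * L * (1 - X * L) := by
  simp only [hSeq]
  linear_combination -C * hL

theorem weight_one (hL : L = 1 + X * C * L ^ 2) (hg : g * (1 - X * L) = 1) (m : ℕ) :
    g * L ^ m * hSeq C L r 1 = C * L ^ (m + 1) := by
  rw [hSeq_one hL]
  linear_combination C * L ^ (m + 1) * hg

theorem hSeq_rec (hC : C = 1 + X * C ^ 2) (hL : L = 1 + X * C * L ^ 2)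
    (hg : g * (1 - X * L) = 1) (hr : r * (1 - X * g) = 1) (d : ℕ) :
    X * hSeq C L r (d + 2) =
      hSeq C L r (d + 1) - hSeq C L r d - X * L * (r ^ (d + 1) - r ^ d) := by
  have h2 : r * (1 - X - X * L) = 1 - X * L := by
    linear_combination (1 - X * L) * hr + X * r * hg
  have hu : g * r * (1 - X - X * L) = 1 := by linear_combination g * h2 + hg
  have e1 : C * (1 - X * C) = 1 := by linear_combination hC
  have e2 : L * C * (1 - X * L - X * C) = 1 := by linear_combination L * hC + hL
  have e3 : L * C ^ 3 * ((1 - X * C) * (1 - X - X * L) - X * (1 - X * L)) = 1 := by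
    linear_combination (L * C ^ 2 * (1 - X - X * L) + L * C * (1 - X * L)) * e1 + e2
  set q : ℤ⟦X⟧ := X * C * L ^ 2 * (C - 1) with hq
  have e4 : q * ((1 - X * C) * (1 - X - X * L) - X * (1 - X * L)) = X ^ 2 * L := by
    rw [hq]
    linear_combination X ^ 2 * L * e3 +
      X * C * L ^ 2 * ((1 - X * C) * (1 - X - X * L) - X * (1 - X * L)) * hC
  have e5 : q * (1 - X * C - X * r) = X * L * (r - 1) := by
    linear_combination (-(q * (1 - X * C - X * r) - X * L * (r - 1))) * hu +
      g * r * (e4 + (-X * q - X * L) * h2)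
  simp only [hSeq, ← hq]
  linear_combination (-hSeq C L r d) * hC - r ^ d * e5

theorem sum_hSeq (hC : C = 1 + X * C ^ 2) (hL : L = 1 + X * C * L ^ 2)
    (hg : g * (1 - X * L) = 1) (hr : r * (1 - X * g) = 1) (d : ℕ) :
    X * ∑ e ∈ range (d + 1), hSeq C L r (e + 1) =
      X * hSeq C L r 1 + hSeq C L r d - 1 - X * L * (r ^ d - 1) := by
  induction d with
  | zero => simp [hSeq]
  | succ d ih => rw [sum_range_succ, mul_add, ih, hSeq_rec hC hL hg hr]; ring

/-- The weights of the children of a state of the second kind in the first tree. -/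
theorem weightII_eq (hL : L = 1 + X * C * L ^ 2)
    (hg : g * (1 - X * L) = 1) (hr : r * (1 - X * g) = 1) (d m : ℕ) :
    g * L ^ m * r ^ d = 1 + X * (g * L ^ (m + 1) * r ^ d +
      ∑ j ∈ range m, g * L ^ (j + 1) * hSeq C L r 1 +
      ∑ e ∈ range d, g * L ^ m * r ^ (e + 1)) := by
  have h1 := sum_pow_shift hL m
  have h2 : X * g * ∑ e ∈ range d, r ^ (e + 1) = r ^ d - 1 := by
    induction d with
    | zero => simp
    | succ d ih => rw [sum_range_succ, mul_add, ih]; linear_combination -r ^ d * hr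
  simp only [weight_one hL hg, ← mul_sum]
  linear_combination L ^ m * r ^ d * hg - h1 - L ^ m * h2

/-- The weights of the children of a state of the first kind in the first tree. -/
theorem weightI_eq (hC : C = 1 + X * C ^ 2) (hL : L = 1 + X * C * L ^ 2)
    (hg : g * (1 - X * L) = 1) (hr : r * (1 - X * g) = 1) (d m : ℕ) :
    g * L ^ (m + 1) * hSeq C L r d = 1 + X * (g * L ^ (m + 2) * r ^ d +
      ∑ j ∈ range m, g * L ^ (j + 1) * hSeq C L r 1 +
      ∑ e ∈ range (d + 1), g * L ^ (m + 1) * hSeq C L r (e + 1)) := by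
  have h1 := sum_pow_shift hL m
  have h2 := sum_hSeq hC hL hg hr d
  have h3 := weight_one (r := r) hL hg (m + 1)
  simp only [weight_one hL hg, ← mul_sum]
  linear_combination -h1 - g * L ^ (m + 1) * h2 - X * h3 + L ^ m * hL + L ^ (m + 1) * hg

/-- The weights of the children of the identity in the second tree. -/
theorem weightInc_eq (hL : L = 1 + X * C * L ^ 2) (hg : g * (1 - X * L) = 1) (n : ℕ) :
    g * L ^ n = 1 + X * (g * L ^ (n + 1) + ∑ j ∈ range n, C * L ^ (j + 2)) := by
  have h1 := sum_pow_shift hL n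
  simp only [← mul_sum]
  linear_combination L ^ n * hg - h1

/-- The weights of the children of a non-identity permutation in the second tree. -/
theorem weightNB_eq (hC : C = 1 + X * C ^ 2) (hL : L = 1 + X * C * L ^ 2) (s m : ℕ) :
    C ^ s * L ^ (m + 1) = 1 + X * (∑ j ∈ range s, C ^ (j + 2) * L ^ (m + 1) +
      ∑ j ∈ range (m + 1), C * L ^ (j + 2)) := by
  have h1 := sum_pow_shift hL (m + 1)
  have h2 := sum_pow_shift hC s
  simp only [← mul_sum, ← sum_mul]
  linear_combination -h1 - L ^ (m + 1) * h2

end Series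

/-! ### Elementary facts about insertion -/

/-- The new name of the old value `x` after the insertion of `v`. -/
def up (v x : ℕ) : ℕ := if x < v then x else x + 1

/-- The old name of the value `x ≠ v` after the insertion of `v`. -/
def down (v x : ℕ) : ℕ := if x < v then x else x - 1

theorem ins_up {n v : ℕ} {B : ℕ → ℕ → Prop} (x y : ℕ) :
    ins n v B (up v x) (up v y) ↔ B x y := by
  have h : ∀ z, up v z ≠ v ∧ (if up v z < v then up v z else up v z - 1) = z := by
    intro z; unfold up; grind
  simp [ins, h]

theorem ins_self_up {n v x : ℕ} {B : ℕ → ℕ → Prop} (hx : x < n) : ins n v B v (up v x) := by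
  unfold ins up; grind

theorem ins_self {n v y : ℕ} {B : ℕ → ℕ → Prop} (hy : y ≤ n) (h : y ≠ v) : ins n v B v y :=
  .inl ⟨rfl, h, hy⟩

theorem ins_cases {n v a b : ℕ} {B : ℕ → ℕ → Prop} (h : ins n v B a b) :
    b ≠ v ∧ (a = v ∨ (a ≠ v ∧ B (down v a) (down v b))) := by
  unfold ins at h; unfold down; grind

theorem ins_lt {n v x y : ℕ} {B : ℕ → ℕ → Prop} (hx : x < v) (hy : y < v) :
    ins n v B x y ↔ B x y := by
  unfold ins; grind

/-! ### The generating tree of Av(4321, 4213) -/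

/-- The values below `h` contain neither 321 nor 213. -/
def Good (B : ℕ → ℕ → Prop) (h : ℕ) : Prop :=
  ∀ x y z, x < h → y < h → z < h → B x y → B y z → ¬ (z < y ∧ y < x) ∧ ¬ (y < x ∧ x < z)

theorem Good.mono {B : ℕ → ℕ → Prop} {h k : ℕ} (hB : Good B h) (hk : k ≤ h) : Good B k :=
  fun x y z hx hy hz => hB x y z (by omega) (by omega) (by omega)

/-- A first entry `v` plays the role of 4 in 4321 or 4213 exactly when the values below it contain
321 or 213. -/
theorem classA_ins {n v : ℕ} {B : ℕ → ℕ → Prop} (hB : IsOrd n B) :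
    ClassA (ins n v B) ↔ ClassA B ∧ Good B v := by
  constructor
  · intro h
    constructor
    · intro a b c d h1 h2 h3
      have := h _ _ _ _ ((ins_up a b).2 h1) ((ins_up b c).2 h2) ((ins_up c d).2 h3)
      unfold up at this
      grind
    · intro x y z hx hy hz h1 h2
      have := h _ _ _ _ (ins_self_up (hB.lt_left _ _ h1)) ((ins_up x y).2 h1) ((ins_up y z).2 h2)
      unfold up at this
      grind
  · rintro ⟨h, hv⟩ a b c d h1 h2 h3
    have g1 := ins_cases h1
    have g2 := ins_cases h2
    have g3 := ins_cases h3
    have k2 : B (down v b) (down v c) := by grind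
    have k3 : B (down v c) (down v d) := by grind
    rcases g1.2 with rfl | ⟨ha, k1⟩
    · have := hv (down a b) (down a c) (down a d)
      unfold down at *
      grind
    · have := h _ _ _ _ k1 k2 k3
      unfold down at this
      grind

theorem not_good_ins {n v h : ℕ} {B : ℕ → ℕ → Prop} (hB : ¬ Good B h) :
    ¬ Good (ins n v B) (h + 1) := by
  intro H
  apply hB
  intro x y z hx hy hz h1 h2
  have := H (up v x) (up v y) (up v z) (by unfold up; grind) (by unfold up; grind)
    (by unfold up; grind) ((ins_up _ _).2 h1) ((ins_up _ _).2 h2)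
  unfold up at this
  grind

theorem good_ins_zero {n h : ℕ} {B : ℕ → ℕ → Prop} (hB : Good B h) :
    Good (ins n 0 B) (h + 1) := by
  intro x y z hx hy hz h1 h2
  have g1 := ins_cases h1
  have g2 := ins_cases h2
  rcases g1.2 with rfl | ⟨ha, k1⟩
  · omega
  · have k2 : B (down 0 y) (down 0 z) := by grind
    have := hB (down 0 x) (down 0 y) (down 0 z)
    simp only [down, Nat.not_lt_zero, if_false] at *
    grind

theorem good_ins_of_le {n v h : ℕ} {B : ℕ → ℕ → Prop} (hv : h ≤ v) (hB : Good B h) :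
    Good (ins n v B) h := by
  intro x y z hx hy hz h1 h2
  rw [ins_lt (by omega) (by omega)] at h1 h2
  exact hB x y z hx hy hz h1 h2

/-- States of the second kind. The values below `m` increase; the window of the values below
`m + d` is the longest containing neither 321 nor 213; for `d > 0` the value `m` lies between the
values `0` and `m - 1`, while for `d = 0` the permutation is the identity. -/
structure TypeII (n : ℕ) (B : ℕ → ℕ → Prop) (d m : ℕ) : Prop where
  le : m + d ≤ n
  incr : ∀ x y, x < y → y < m → B x y
  good : Good B (m + d)
  id : d = 0 → m = n
  mid : 0 < d → 0 < m ∧ B 0 m ∧ B m (m - 1)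
  max : m + d < n → ¬ Good B (m + d + 1)

/-- States of the first kind. The window of the values below `m + d` reads
`m, …, m + d - 1, 0, …, m - 1`, and it is the longest containing neither 321 nor 213. -/
structure TypeI (n : ℕ) (B : ℕ → ℕ → Prop) (d m : ℕ) : Prop where
  le : m + d ≤ n
  hd : 0 < d
  hm : 0 < m
  incr : ∀ x y, x < y → y < m → B x y
  upper : ∀ x y, m ≤ x → x < y → y < m + d → B x y
  front : ∀ x, m ≤ x → x < m + d → B x 0
  max : m + d < n → ¬ Good B (m + d + 1)

theorem TypeI.front' {n d m : ℕ} {B : ℕ → ℕ → Prop} (hB : IsOrd n B) (h : TypeI n B d m)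
    (x y : ℕ) (hx : m ≤ x) (hx' : x < m + d) (hy : y < m) : B x y := by
  rcases Nat.eq_zero_or_pos y with rfl | hy0
  · exact h.front x hx hx'
  · exact hB.trans _ _ _ (h.front x hx hx') (h.incr 0 y hy0 hy)

theorem TypeI.good {n d m : ℕ} {B : ℕ → ℕ → Prop} (hB : IsOrd n B) (h : TypeI n B d m) :
    Good B (m + d) := by
  have asymm : ∀ x y, B x y → ¬ B y x := fun x y h1 h2 => hB.irrefl _ (hB.trans _ _ _ h1 h2)
  intro x y z hx hy hz h1 h2
  have a1 := asymm _ _ h1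
  have a2 := asymm _ _ h2
  have i1 := h.incr y x
  have i2 := h.incr z y
  have u1 := h.upper y x
  have u2 := h.upper z y
  have f1 := h.front' hB z y
  have f2 := h.front' hB z x
  have := hB.trans _ _ _ h1 h2
  have a3 := asymm _ _ this
  grind

theorem typeII_zero {n d m : ℕ} {B : ℕ → ℕ → Prop} (h : TypeII n B d m) :
    TypeII (n + 1) (ins n 0 B) d (m + 1) where
  le := by have := h.le; omega
  incr := by
    intro x y hxy hy
    have := h.incr (x - 1) (y - 1)
    have := h.le
    unfold ins; grind
  good := by have := good_ins_zero (n := n) h.good; rwa [add_right_comm] at this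
  id := by have := h.id; omega
  mid := by
    intro hd
    obtain ⟨h1, h2, h3⟩ := h.mid hd
    have := h.le
    refine ⟨by omega, ins_self (by omega) (by omega), ?_⟩
    unfold ins; grind
  max := by
    intro hn
    have := not_good_ins (n := n) (v := 0) (h.max (by omega))
    rwa [add_right_comm m 1 d]

/-- The value `v` followed by the increasing values below it; the next value stands after `0`
and so closes the window. -/
theorem typeI_one {n v : ℕ} {B : ℕ → ℕ → Prop} (hv : v ≤ n) (hv0 : 0 < v)
    (incr : ∀ x y, x < y → y < v → B x y) (hlast : v < n → B 0 v) :
    TypeI (n + 1) (ins n v B) 1 v where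
  le := by omega
  hd := by omega
  hm := hv0
  incr := by
    intro x y hxy hy
    rw [ins_lt (by omega) hy]
    exact incr x y hxy hy
  upper := by intro x y; omega
  front := by
    intro x hx hx'
    obtain rfl : x = v := by omega
    exact ins_self (by omega) (by omega)
  max := by
    intro hn H
    have h1 : ins n v B v 0 := ins_self (by omega) (by omega)
    have h2 : ins n v B 0 (v + 1) := by
      have := hlast (by omega)
      unfold ins; grind
    have := (H v 0 (v + 1) (by omega) (by omega) (by omega) h1 h2).2
    omega

/-- A first entry above a descending pair of values starts a 321, so the window after the insertion
ends below it. -/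
theorem not_good_of_descent {n v m k : ℕ} {B : ℕ → ℕ → Prop} (hv : v ≤ n) (hm : m < v)
    (hk : k < m) (h : B m k) : ¬ Good (ins n v B) (v + 1) := by
  intro H
  have h1 : ins n v B v m := ins_self (by omega) (by omega)
  have h2 : ins n v B m k := (ins_lt hm (by omega)).2 h
  have := (H v m k (by omega) (by omega) (by omega) h1 h2).1
  omega

theorem typeII_cut {n d m v : ℕ} {B : ℕ → ℕ → Prop} (h : TypeII n B d m) (hv : m < v)
    (hv' : v ≤ m + d) : TypeII (n + 1) (ins n v B) (v - m) m where
  le := by have := h.le; omega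
  incr := by
    intro x y hxy hy
    rw [ins_lt (by omega) (by omega)]
    exact h.incr x y hxy hy
  good := good_ins_of_le (by omega) (h.good.mono (by omega))
  id := by omega
  mid := by
    intro hd
    obtain ⟨h1, h2, h3⟩ := h.mid (by omega)
    rw [ins_lt (by omega) (by omega), ins_lt (by omega) (by omega)]
    exact ⟨h1, h2, h3⟩
  max := by
    intro _
    obtain ⟨h1, h2, h3⟩ := h.mid (by omega)
    rw [show m + (v - m) = v by omega]
    exact not_good_of_descent (by have := h.le; omega) hv (by omega) h3

theorem typeII_of_typeI {n d m : ℕ} {B : ℕ → ℕ → Prop} (hB : IsOrd n B) (h : TypeI n B d m) :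
    TypeII (n + 1) (ins n 0 B) d (m + 1) where
  le := by have := h.le; omega
  incr := by
    intro x y hxy hy
    have := h.incr (x - 1) (y - 1)
    have := h.le
    unfold ins; grind
  good := by have := good_ins_zero (n := n) (h.good hB); rwa [add_right_comm] at this
  id := by have := h.hd; omega
  mid := by
    intro hd
    have h1 := h.hm
    have h2 := h.le
    have h3 := h.front' hB m (m - 1) le_rfl (by omega) (by omega)
    refine ⟨by omega, ins_self (by omega) (by omega), ?_⟩
    unfold ins; grind
  max := by
    intro hn
    have := not_good_ins (n := n) (v := 0) (h.max (by omega))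
    rwa [add_right_comm m 1 d]

theorem typeI_front {n d m : ℕ} {B : ℕ → ℕ → Prop} (h : TypeI n B d m) :
    TypeI (n + 1) (ins n m B) (d + 1) m where
  le := by have := h.le; omega
  hd := by omega
  hm := h.hm
  incr := by
    intro x y hxy hy
    rw [ins_lt (by omega) (by omega)]
    exact h.incr x y hxy hy
  upper := by
    intro x y hx hxy hy
    have := h.upper (x - 1) (y - 1)
    have := h.le
    unfold ins; grind
  front := by
    intro x hx hx'
    have := h.front (x - 1)
    have := h.le
    have := h.hm
    unfold ins; grind
  max := by
    intro hn
    exact not_good_ins (n := n) (v := m) (h.max (by omega))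

theorem typeI_cut {n d m v : ℕ} {B : ℕ → ℕ → Prop} (h : TypeI n B d m) (hv : m < v)
    (hv' : v ≤ m + d) : TypeI (n + 1) (ins n v B) (v - m) m where
  le := by have := h.le; omega
  hd := by omega
  hm := h.hm
  incr := by
    intro x y hxy hy
    rw [ins_lt (by omega) (by omega)]
    exact h.incr x y hxy hy
  upper := by
    intro x y hx hxy hy
    rw [ins_lt (by omega) (by omega)]
    exact h.upper x y hx hxy (by omega)
  front := by
    intro x hx hx'
    rw [ins_lt (by omega) (by omega)]
    exact h.front x hx (by omega)
  max := by
    intro _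
    have := h.hd
    rw [show m + (v - m) = v by omega]
    exact not_good_of_descent (by have := h.le; omega) hv h.hm (h.front m le_rfl (by omega))

/-- Assembly of the sum over all insertion heights `v` from the heights `0`, `1, …, m`,
`m + 1, …, m + d`; the others contribute nothing. -/
theorem sum_heights {n m d : ℕ} (h : m + d ≤ n) (f : ℕ → ℤ⟦X⟧)
    (hf : ∀ v, m + d < v → v ≤ n → f v = 0) :
    ∑ v ∈ range (n + 1), f v =
      f 0 + ∑ j ∈ range m, f (j + 1) + ∑ e ∈ range d, f (m + (e + 1)) := by
  have h1 : ∑ v ∈ range (m + d + 1), f v = ∑ v ∈ range (n + 1), f v := by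
    refine sum_subset (fun v hv => ?_) fun v hv hv' => hf v ?_ ?_ <;>
      simp only [mem_range] at * <;> omega
  rw [← h1, sum_range_succ', sum_range_add]
  simp only [add_assoc]
  ring

/-- The state of a permutation in the first tree together with its weight. -/
def RelA (C L g r : ℤ⟦X⟧) (n : ℕ) (B : ℕ → ℕ → Prop) (F : ℤ⟦X⟧) : Prop :=
  ∃ d m, (TypeII n B d m ∧ F = g * L ^ m * r ^ d) ∨
    (TypeI n B d m ∧ F = g * L ^ m * hSeq C L r d)

theorem classA_ins_of_window {n w v : ℕ} {B : ℕ → ℕ → Prop} (hB : IsOrd n B) (hA : ClassA B)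
    (hgood : Good B w) (hmax : w < n → ¬ Good B (w + 1)) (hv : v ≤ n) :
    ClassA (ins n v B) ↔ v ≤ w := by
  rw [classA_ins hB]
  constructor
  · rintro ⟨-, h⟩
    by_contra hlt
    exact hmax (by omega) (h.mono (by omega))
  · intro h
    exact ⟨hA, hgood.mono h⟩

theorem relA_step {C L g r : ℤ⟦X⟧} (hC : C = 1 + X * C ^ 2) (hL : L = 1 + X * C * L ^ 2)
    (hg : g * (1 - X * L) = 1) (hr : r * (1 - X * g) = 1) (n : ℕ) (B : ℕ → ℕ → Prop) (F : ℤ⟦X⟧)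
    (hB : IsOrd n B) (hA : ClassA B) (hF : RelA C L g r n B F) : ∃ G : ℕ → ℤ⟦X⟧,
      (∀ v ≤ n, (ClassA (ins n v B) ∧ RelA C L g r (n + 1) (ins n v B) (G v)) ∨
        (¬ ClassA (ins n v B) ∧ G v = 0)) ∧
      F = 1 + X * ∑ v ∈ range (n + 1), G v := by
  obtain ⟨d, m, ⟨h, rfl⟩ | ⟨h, rfl⟩⟩ := hF
  · refine ⟨fun v => if v = 0 then g * L ^ (m + 1) * r ^ d else
      if v ≤ m then g * L ^ v * hSeq C L r 1 else
      if v ≤ m + d then g * L ^ m * r ^ (v - m) else 0, fun v hv => ?_, ?_⟩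
    · have hcl := classA_ins_of_window hB hA h.good h.max hv
      rw [hcl]
      dsimp only
      split_ifs with h0 h1 h2
      · subst h0
        exact .inl ⟨by omega, d, m + 1, .inl ⟨typeII_zero h, rfl⟩⟩
      · refine .inl ⟨by omega, 1, v, .inr ⟨typeI_one hv (by omega) ?_ ?_, rfl⟩⟩
        · exact fun x y hxy hy => h.incr x y hxy (by omega)
        · intro hvn
          rcases h1.lt_or_eq with h1 | rfl
          · exact h.incr 0 v (by omega) h1
          · exact (h.mid (by have := h.id; omega)).2.1
      · exact .inl ⟨h2, v - m, m, .inl ⟨typeII_cut h (by omega) h2, rfl⟩⟩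
      · exact .inr ⟨h2, rfl⟩
    · rw [weightII_eq hL hg hr, sum_heights h.le]
      · congr 3
        · congr 1
          refine sum_congr rfl fun j hj => ?_
          rw [mem_range] at hj
          rw [if_neg (by omega), if_pos (by omega)]
        · refine sum_congr rfl fun e he => ?_
          rw [mem_range] at he
          rw [if_neg (by omega), if_neg (by omega), if_pos (by omega), Nat.add_sub_cancel_left]
      · intro v h1 h2
        rw [if_neg (by omega), if_neg (by omega), if_neg (by omega)]
  · have hm := h.hm
    refine ⟨fun v => if v = 0 then g * L ^ (m + 1) * r ^ d else
      if v < m then g * L ^ v * hSeq C L r 1 else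
      if v = m then g * L ^ m * hSeq C L r (d + 1) else
      if v ≤ m + d then g * L ^ m * hSeq C L r (v - m) else 0, fun v hv => ?_, ?_⟩
    · have hcl := classA_ins_of_window hB hA (h.good hB) h.max hv
      rw [hcl]
      dsimp only
      split_ifs with h0 h1 h2 h3
      · subst h0
        exact .inl ⟨by omega, d, m + 1, .inl ⟨typeII_of_typeI hB h, rfl⟩⟩
      · refine .inl ⟨by omega, 1, v, .inr ⟨typeI_one hv (by omega) ?_ ?_, rfl⟩⟩
        · exact fun x y hxy hy => h.incr x y hxy (by omega)
        · intro hvn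
          exact h.incr 0 v (by omega) h1
      · subst h2
        exact .inl ⟨by omega, d + 1, v, .inr ⟨typeI_front h, rfl⟩⟩
      · exact .inl ⟨h3, v - m, m, .inr ⟨typeI_cut h (by omega) h3, rfl⟩⟩
      · exact .inr ⟨h3, rfl⟩
    · obtain ⟨k, rfl⟩ : ∃ k, m = k + 1 := ⟨m - 1, by omega⟩
      rw [weightI_eq hC hL hg hr, sum_heights h.le, sum_range_succ _ d, sum_range_succ _ k]
      · have e1 : ∀ j ∈ range k, (if j + 1 = 0 then g * L ^ (k + 1 + 1) * r ^ d else
            if j + 1 < k + 1 then g * L ^ (j + 1) * hSeq C L r 1 else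
            if j + 1 = k + 1 then g * L ^ (k + 1) * hSeq C L r (d + 1) else
            if j + 1 ≤ k + 1 + d then g * L ^ (k + 1) * hSeq C L r (j + 1 - (k + 1)) else 0) =
            g * L ^ (j + 1) * hSeq C L r 1 := by
          intro j hj
          rw [mem_range] at hj
          rw [if_neg (by omega), if_pos (by omega)]
        have e2 : ∀ e ∈ range d, (if k + 1 + (e + 1) = 0 then g * L ^ (k + 1 + 1) * r ^ d else
            if k + 1 + (e + 1) < k + 1 then g * L ^ (k + 1 + (e + 1)) * hSeq C L r 1 else
            if k + 1 + (e + 1) = k + 1 then g * L ^ (k + 1) * hSeq C L r (d + 1) else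
            if k + 1 + (e + 1) ≤ k + 1 + d then
              g * L ^ (k + 1) * hSeq C L r (k + 1 + (e + 1) - (k + 1)) else 0) =
            g * L ^ (k + 1) * hSeq C L r (e + 1) := by
          intro e he
          rw [mem_range] at he
          rw [if_neg (by omega), if_neg (by omega), if_neg (by omega), if_pos (by omega),
            Nat.add_sub_cancel_left]
        rw [sum_congr rfl e1, sum_congr rfl e2, if_pos rfl, if_neg (by omega),
          if_neg (by omega), if_pos rfl]
        ring
      · intro v h1 h2
        rw [if_neg (by omega), if_neg (by omega), if_neg (by omega), if_neg (by omega)]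

theorem relA_root {C L g r : ℤ⟦X⟧} (B : ℕ → ℕ → Prop) (hB : IsOrd 0 B) :
    ClassA B ∧ RelA C L g r 0 B g := by
  have hn : ∀ x y, ¬ B x y := fun x y h => absurd (hB.lt_left _ _ h) (by omega)
  refine ⟨fun a b c d h => absurd h (hn _ _), 0, 0, .inl ⟨?_, by simp⟩⟩
  constructor
  · omega
  · omega
  · exact fun x y z hx => absurd hx (by omega)
  · omega
  · omega
  · omega

theorem cardA {C L g r : ℤ⟦X⟧} (hC : C = 1 + X * C ^ 2) (hL : L = 1 + X * C * L ^ 2)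
    (hg : g * (1 - X * L) = 1) (hr : r * (1 - X * g) = 1) (N : ℕ) :
    (Nat.card {π : Equiv.Perm (Fin N) // ClassA (Before π)} : ℤ) = coeff N g :=
  card_eq_coeff ClassA (RelA C L g r)
    (fun _ _ _ hB _ h => ((classA_ins hB).1 h).1)
    (relA_step hC hL hg hr) g (fun B hB => relA_root B hB) N

/-! ### The generating tree of Av(2413, 2431, 23154) -/

/-- The values from `v` on increase. -/
def IncrAbove (n : ℕ) (B : ℕ → ℕ → Prop) (v : ℕ) : Prop :=
  ∀ x y, v ≤ x → x < y → y < n → B x y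

/-- All values below `v` stand to the left of all other values: the permutation is a direct sum
whose first summand has length `v`. -/
def IsCut (n : ℕ) (B : ℕ → ℕ → Prop) (v : ℕ) : Prop :=
  ∀ x y, x < v → v ≤ y → y < n → B x y

/-- The admissible first entries. If neither the values from `v` on increase nor `v` is a cut, the
first entry `v` plays the role of 2 in one of the three patterns. -/
theorem classB_ins {n v : ℕ} {B : ℕ → ℕ → Prop} (hB : IsOrd n B) :
    ClassB (ins n v B) ↔ ClassB B ∧ (IncrAbove n B v ∨ IsCut n B v) := by
  have asymm : ∀ x y, B x y → ¬ B y x := fun x y h1 h2 => hB.irrefl _ (hB.trans _ _ _ h1 h2)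
  constructor
  · rintro ⟨h, h'⟩
    refine ⟨⟨?_, ?_⟩, ?_⟩
    · intro a b c d h1 h2 h3
      have := h _ _ _ _ ((ins_up a b).2 h1) ((ins_up b c).2 h2) ((ins_up c d).2 h3)
      unfold up at this
      grind
    · intro a b c d e h1 h2 h3 h4
      have := h' _ _ _ _ _ ((ins_up a b).2 h1) ((ins_up b c).2 h2) ((ins_up c d).2 h3)
        ((ins_up d e).2 h4)
      unfold up at this
      grind
    · -- A descent `e d` above `v` and an inversion `c a` across `v` would, with `v`, form one of
      -- the three patterns.
      have key4 : ∀ b c d, B b c → B c d →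
          ¬ (c < v ∧ v ≤ d ∧ d < b) ∧ ¬ (d < v ∧ v ≤ c ∧ c < b) := by
        intro b c d h1 h2
        have := h _ _ _ _ (ins_self_up (hB.lt_left _ _ h1)) ((ins_up b c).2 h1)
          ((ins_up c d).2 h2)
        unfold up at this
        grind
      have key5 : ∀ b c d e, B b c → B c d → B d e → ¬ (c < v ∧ v ≤ b ∧ b < e ∧ e < d) := by
        intro b c d e h1 h2 h3
        have := h' _ _ _ _ _ (ins_self_up (hB.lt_left _ _ h1)) ((ins_up b c).2 h1)
          ((ins_up c d).2 h2) ((ins_up d e).2 h3)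
        unfold up at this
        grind
      by_contra hcon
      simp only [IncrAbove, IsCut, not_or, not_forall] at hcon
      obtain ⟨⟨d, e, hd, hde, he, hne⟩, a, c, ha, hc, hcn, hac⟩ := hcon
      have hed : B e d := (hB.total e d he (by omega) (by omega)).resolve_right hne
      have hca : B c a := (hB.total c a hcn (by omega) (by omega)).resolve_right hac
      rcases hB.total e a he (by omega) (by omega) with hea | hae
      · rcases hB.total d a (by omega) (by omega) (by omega) with hda | had
        · exact (key4 e d a hed hda).2 ⟨ha, hd, hde⟩
        · exact (key4 e a d hea had).1 ⟨ha, hd, hde⟩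
      · have had := hB.trans _ _ _ hae hed
        rcases lt_trichotomy c d with hcd | rfl | hcd
        · exact key5 c a e d hca hae hed ⟨ha, hc, hcd, hde⟩
        · exact asymm _ _ had hca
        · exact (key4 c a d hca had).1 ⟨ha, hd, hcd⟩
  · rintro ⟨⟨h, h'⟩, hv⟩
    constructor
    · intro a b c d h1 h2 h3
      have g1 := ins_cases h1
      have g2 := ins_cases h2
      have g3 := ins_cases h3
      have k2 : B (down v b) (down v c) := by grind
      have k3 : B (down v c) (down v d) := by grind
      rcases g1.2 with rfl | ⟨ha, k1⟩
      · have n2 := asymm _ _ k2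
        have n3 := asymm _ _ k3
        have k4 := hB.trans _ _ _ k2 k3
        have n4 := asymm _ _ k4
        have := hB.lt_left _ _ k2
        rcases hv with hv | hv
        · have v1 := hv (down a c) (down a b)
          have v2 := hv (down a d) (down a b)
          unfold down at *
          grind
        · have v1 := hv (down a c) (down a b)
          have v2 := hv (down a d) (down a b)
          unfold down at *
          grind
      · have := h _ _ _ _ k1 k2 k3
        unfold down at this
        grind
    · intro a b c d e h1 h2 h3 h4
      have g1 := ins_cases h1
      have g2 := ins_cases h2
      have g3 := ins_cases h3
      have g4 := ins_cases h4
      have k2 : B (down v b) (down v c) := by grind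
      have k3 : B (down v c) (down v d) := by grind
      have k4 : B (down v d) (down v e) := by grind
      rcases g1.2 with rfl | ⟨ha, k1⟩
      · have n2 := asymm _ _ k2
        have n4 := asymm _ _ k4
        have := hB.lt_left _ _ k2
        have := hB.lt_left _ _ k4
        rcases hv with hv | hv
        · have v1 := hv (down a e) (down a d)
          unfold down at *
          grind
        · have v1 := hv (down a c) (down a b)
          unfold down at *
          grind
      · have := h' _ _ _ _ _ k1 k2 k3 k4
        unfold down at this
        grind

/-- A permutation other than the identity whose longest run of increasing top values consists of
the values from `k` on. -/
structure TopRun (n : ℕ) (B : ℕ → ℕ → Prop) (k : ℕ) : Prop where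
  pos : 0 < k
  lt : k < n
  incr : IncrAbove n B k
  desc : B k (k - 1)

open Classical in
/-- The cuts below `k`. -/
noncomputable def cuts (n : ℕ) (B : ℕ → ℕ → Prop) (k : ℕ) : Finset ℕ :=
  (range k).filter (IsCut n B)

theorem incrAbove_ins {n v : ℕ} {B : ℕ → ℕ → Prop} (h : IncrAbove n B v) :
    IncrAbove (n + 1) (ins n v B) v := by
  intro x y hx hxy hy
  have := h (x - 1) (y - 1)
  unfold ins; grind

/-- A new first entry leaves no cut below its value except the trivial one. -/
theorem cuts_ins_self {n v : ℕ} {B : ℕ → ℕ → Prop} (hv : 0 < v) (hvn : v ≤ n) :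
    cuts (n + 1) (ins n v B) v = {0} := by
  ext u
  simp only [cuts, mem_filter, mem_range, mem_singleton]
  constructor
  · rintro ⟨hu, hc⟩
    by_contra h0
    exact (ins_cases (hc 0 v (by omega) (by omega) (by omega))).1 rfl
  · rintro rfl
    exact ⟨hv, fun x y hx => absurd hx (by omega)⟩

theorem topRun_ins_self {n v : ℕ} {B : ℕ → ℕ → Prop} (hv : 0 < v) (hvn : v ≤ n)
    (h : IncrAbove n B v) : TopRun (n + 1) (ins n v B) v where
  pos := hv
  lt := by omega
  incr := incrAbove_ins h
  desc := ins_self (by omega) (by omega)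

theorem topRun_ins_cut {n k v : ℕ} {B : ℕ → ℕ → Prop} (h : TopRun n B k) (hv : v < k) :
    TopRun (n + 1) (ins n v B) (k + 1) where
  pos := by omega
  lt := by have := h.lt; omega
  incr := by
    intro x y hx hxy hy
    have := h.incr (x - 1) (y - 1)
    unfold ins; grind
  desc := by
    have := h.desc
    have := h.lt
    unfold ins; grind

open Classical in
/-- Putting a cut `v` in front destroys the cuts below `v`, shifts the others and creates the trivial
cut. -/
theorem card_cuts_ins_cut {n k v : ℕ} {B : ℕ → ℕ → Prop} (hk : k < n) (hv : v < k)
    (hc : IsCut n B v) : #(cuts (n + 1) (ins n v B) (k + 1)) =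
      #((cuts n B k).filter (v ≤ ·)) + 1 := by
  have key : cuts (n + 1) (ins n v B) (k + 1) =
      insert 0 (((cuts n B k).filter (v ≤ ·)).map (addRightEmbedding 1)) := by
    ext u
    simp only [cuts, mem_filter, mem_range, mem_insert, mem_map, addRightEmbedding_apply]
    constructor
    · rintro ⟨hu, hcu⟩
      by_cases h0 : u = 0
      · exact .inl h0
      right
      have huv : v < u := by
        by_contra hlt
        exact (ins_cases (hcu 0 v (by omega) (by omega) (by omega))).1 rfl
      refine ⟨u - 1, ⟨⟨by omega, fun x y hx hy hyn => ?_⟩, by omega⟩, by omega⟩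
      have := hcu (up v x) (up v y) (by unfold up; grind) (by unfold up; grind)
        (by unfold up; grind)
      exact (ins_up x y).1 this
    · rintro (rfl | ⟨w, ⟨⟨hw, hcw⟩, hvw⟩, rfl⟩)
      · exact ⟨by omega, fun x y hx => absurd hx (by omega)⟩
      · refine ⟨by omega, fun x y hx hy hyn => ?_⟩
        have := hcw (if x < v then x else x - 1) (if y < v then y else y - 1)
        have := hc x (y - 1)
        unfold ins
        grind
  rw [key, card_insert_of_notMem (by simp), card_map]

/-- Listing the elements of `S` from the largest down. -/
theorem sum_card_filter_le (S : Finset ℕ) (f : ℕ → ℤ⟦X⟧) :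
    ∑ v ∈ S, f (#(S.filter (v ≤ ·))) = ∑ j ∈ range #S, f (j + 1) := by
  induction S using Finset.induction_on_min with
  | empty => simp
  | insert a S ha ih =>
    have hnot : a ∉ S := fun h => lt_irrefl _ (ha a h)
    rw [sum_insert hnot, card_insert_of_notMem hnot, sum_range_succ, ← ih, add_comm]
    congr 1
    · refine sum_congr rfl fun v hv => ?_
      rw [filter_insert, if_neg (by have := ha v hv; omega)]
    · rw [filter_true_of_mem, card_insert_of_notMem hnot]
      intro x hx
      rcases mem_insert.1 hx with rfl | hx
      · exact le_rfl
      · exact (ha x hx).le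

/-- The state of a permutation in the second tree together with its weight: the identity, or a
permutation with a given top run and a given number of cuts below that run. -/
def RelB (C L g : ℤ⟦X⟧) (n : ℕ) (B : ℕ → ℕ → Prop) (F : ℤ⟦X⟧) : Prop :=
  (IncrAbove n B 0 ∧ F = g * L ^ n) ∨
    ∃ k, TopRun n B k ∧ F = C ^ #(cuts n B k) * L ^ (n - k + 1)

theorem relB_ins_self {C L g : ℤ⟦X⟧} {n v : ℕ} {B : ℕ → ℕ → Prop} (hv : 0 < v) (hvn : v ≤ n)
    (h : IncrAbove n B v) : RelB C L g (n + 1) (ins n v B) (C * L ^ (n - v + 2)) := by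
  refine .inr ⟨v, topRun_ins_self hv hvn h, ?_⟩
  rw [cuts_ins_self hv hvn, card_singleton, pow_one, show n + 1 - v + 1 = n - v + 2 by omega]

open Classical in
theorem relB_step {C L g : ℤ⟦X⟧} (hC : C = 1 + X * C ^ 2) (hL : L = 1 + X * C * L ^ 2)
    (hg : g * (1 - X * L) = 1) (n : ℕ) (B : ℕ → ℕ → Prop) (F : ℤ⟦X⟧)
    (hB : IsOrd n B) (hcl : ClassB B) (hF : RelB C L g n B F) : ∃ G : ℕ → ℤ⟦X⟧,
      (∀ v ≤ n, (ClassB (ins n v B) ∧ RelB C L g (n + 1) (ins n v B) (G v)) ∨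
        (¬ ClassB (ins n v B) ∧ G v = 0)) ∧
      F = 1 + X * ∑ v ∈ range (n + 1), G v := by
  have hmono : ∀ {k v}, IncrAbove n B k → k ≤ v → IncrAbove n B v :=
    fun h hkv x y hx => h x y (by omega)
  rcases hF with ⟨h, rfl⟩ | ⟨k, h, rfl⟩
  · refine ⟨fun v => if v = 0 then g * L ^ (n + 1) else C * L ^ (n - v + 2),
      fun v hv => .inl ⟨(classB_ins hB).2 ⟨hcl, .inl (hmono h (Nat.zero_le v))⟩, ?_⟩, ?_⟩
    · dsimp only
      split_ifs with h0
      · subst h0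
        exact .inl ⟨incrAbove_ins h, rfl⟩
      · exact relB_ins_self (by omega) hv (hmono h (Nat.zero_le v))
    · rw [weightInc_eq hL hg, sum_range_succ', if_pos rfl, add_comm (∑ _ ∈ _, _),
        ← sum_range_reflect]
      congr 3
      refine sum_congr rfl fun j hj => ?_
      rw [mem_range] at hj
      rw [if_neg (by omega), show n - 1 - j = n - (j + 1) by omega]
  · have hk := h.lt
    have hk0 := h.pos
    refine ⟨fun v => if k ≤ v then C * L ^ (n - v + 2) else if IsCut n B v then
      C ^ (#((cuts n B k).filter (v ≤ ·)) + 1) * L ^ (n - k + 1) else 0, fun v hv => ?_, ?_⟩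
    · rw [classB_ins hB]
      dsimp only
      split_ifs with h1 h2
      · exact .inl ⟨⟨hcl, .inl (hmono h.incr h1)⟩,
          relB_ins_self (by omega) hv (hmono h.incr h1)⟩
      · refine .inl ⟨⟨hcl, .inr h2⟩, .inr ⟨k + 1, topRun_ins_cut h (by omega), ?_⟩⟩
        rw [card_cuts_ins_cut hk (by omega) h2, Nat.add_sub_add_right]
      · refine .inr ⟨?_, rfl⟩
        rintro ⟨-, h3 | h3⟩
        · have := h3 (k - 1) k (by omega) (by omega) hk
          exact hB.irrefl _ (hB.trans _ _ _ this h.desc)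
        · exact h2 h3
    · have e1 : ∑ j ∈ range #(cuts n B k), C ^ (j + 2) * L ^ (n - k + 1) =
          ∑ v ∈ range k, if IsCut n B v then
            C ^ (#((cuts n B k).filter (v ≤ ·)) + 1) * L ^ (n - k + 1) else 0 := by
        rw [← sum_filter]
        exact (sum_card_filter_le (cuts n B k) fun j => C ^ (j + 1) * L ^ (n - k + 1)).symm
      have hsplit : n + 1 = k + (n - k + 1) := by omega
      rw [weightNB_eq hC hL, e1, hsplit, Finset.sum_range_add _ k]
      refine congrArg (fun S : ℤ⟦X⟧ => 1 + X * S) (congrArg₂ (fun S T : ℤ⟦X⟧ => S + T) ?_ ?_)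
      · refine sum_congr rfl fun v hv => ?_
        rw [mem_range] at hv
        rw [if_neg (by omega : ¬ k ≤ v)]
      · rw [← sum_range_reflect]
        refine sum_congr rfl fun j hj => ?_
        rw [mem_range] at hj
        rw [if_pos (by omega), show n - k + 1 - 1 - j = n - (k + j) by omega]

theorem relB_root {C L g : ℤ⟦X⟧} (B : ℕ → ℕ → Prop) (hB : IsOrd 0 B) :
    ClassB B ∧ RelB C L g 0 B g := by
  have hn : ∀ x y, ¬ B x y := fun x y h => absurd (hB.lt_left _ _ h) (by omega)
  refine ⟨⟨fun a b c d h => absurd h (hn _ _), fun a b c d e h => absurd h (hn _ _)⟩,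
    .inl ⟨fun x y _ _ hy => absurd hy (by omega), by simp⟩⟩

theorem cardB {C L g : ℤ⟦X⟧} (hC : C = 1 + X * C ^ 2) (hL : L = 1 + X * C * L ^ 2)
    (hg : g * (1 - X * L) = 1) (N : ℕ) :
    (Nat.card {π : Equiv.Perm (Fin N) // ClassB (Before π)} : ℤ) = coeff N g :=
  card_eq_coeff ClassB (RelB C L g)
    (fun _ _ _ hB _ h => ((classB_ins hB).1 h).1)
    (relB_step hC hL hg) g (fun B hB => relB_root B hB) N

end Wilf

/-- the classes `Av(4321, 4213)` and `Av(2413, 2431, 23154)` are Wilf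
equivalent. -/
theorem wilf_equivalence (n : ℕ) (hn : 1 ≤ n) :
    Nat.card {π : Equiv.Perm (Fin n) // Pattern.Avoids π p4321 ∧ Pattern.Avoids π p4213}
      = Nat.card {π : Equiv.Perm (Fin n) //
          Pattern.Avoids π p2413 ∧ Pattern.Avoids π p2431 ∧ Pattern.Avoids π p23154} := by
  obtain ⟨C, L, g, r, hC, hL, hg, hr⟩ := Wilf.exists_series
  simp only [Wilf.avoidsA_iff, Wilf.avoidsB_iff]
  exact_mod_cast (Wilf.cardA hC hL hg hr n).trans (Wilf.cardB hC hL hg n).symm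
end
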